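/- arXiv:2010.09502 — 4 statements merged into one kernel-verified Lean document; each statement's English description precedes it below -/
import Mathlib

section
/- There exists a constant B > 0 such that for all x > 0 and all n ∈ ℕ, n ≥ 1, |J_{in/2}(x)² + Y_{in/2}(x)²| ≤ B · x^{−1/4}. -/
open MeasureTheory Filter Topology

/-- Bessel function of the first kind of complex order `ν` at real `x > 0`. -/
noncomputable def besselJ (ν : ℂ) (x : ℝ) : ℂ :=
  ∑' k : ℕ, ((-1 : ℂ) ^ k * Complex.exp ((ν + 2 * k) * (Real.log (x / 2) : ℂ))) /
    ((Nat.factorial k : ℂ) * Complex.Gamma (ν + k + 1))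

/-- Bessel function of the second kind of complex order `ν` at real `x > 0`. -/
noncomputable def besselY (ν : ℂ) (x : ℝ) : ℂ :=
  (besselJ ν x * Complex.cos (Real.pi * ν) - besselJ (-ν) x) / Complex.sin (Real.pi * ν)

/-- Bessel function of the first kind of order `0` (real-valued). -/
noncomputable def besselJ0 (x : ℝ) : ℝ :=
  ∑' k : ℕ, (-1 : ℝ) ^ k * (x / 2) ^ (2 * k) / (Nat.factorial k : ℝ) ^ 2

/-- Lommel function `S_{-1,0}` for `x > 0`. -/
noncomputable def lommelS (x : ℝ) : ℝ :=
  ∫ t in Set.Ioi (0 : ℝ), t * Real.exp (-x * Real.sinh t)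

/-- Struve function `K₀` for `x > 0`. -/
noncomputable def struveK0 (x : ℝ) : ℝ :=
  (2 / Real.pi) * ∫ t in Set.Ioi (0 : ℝ), Real.exp (-x * Real.sinh t)

/-- Bessel function of the second kind of order `0` (real-valued, for `x > 0`). -/
noncomputable def besselY0 (x : ℝ) : ℝ :=
  (2 / Real.pi) * ((Real.log (x / 2) + Real.eulerMascheroniConstant) * besselJ0 x +
    ∑' k : ℕ, (-1 : ℝ) ^ k * ((harmonic (k + 1) : ℚ) : ℝ) * (x / 2) ^ (2 * (k + 1)) /
      (Nat.factorial (k + 1) : ℝ) ^ 2)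

/-- Struve function `H₀`: `H₀ = K₀ˢ + Y₀`. -/
noncomputable def struveH0 (x : ℝ) : ℝ := struveK0 x + besselY0 x

/-- super-exponentially decaying coefficients -/
def PCoef (c : ℕ → ℂ) : Prop := ∀ r : ℝ, 0 ≤ r → Summable (fun k => ‖c k‖ * r ^ k)

/-- generalized series -/
noncomputable def gser (ν : ℂ) (c : ℕ → ℂ) (t : ℝ) : ℂ :=
  ∑' k : ℕ, c k * Complex.exp ((ν + 2 * k) * (t : ℂ))

lemma PCoef.mul {c : ℕ → ℂ} (h : PCoef c) (ν : ℂ) : PCoef (fun k => (ν + 2 * k) * c k) := by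
  intro r hr
  have h2 := (h (2 * r) (by positivity)).mul_left (‖ν‖ + 2)
  refine Summable.of_nonneg_of_le (fun k => by positivity) (fun k => ?_) h2
  have hk : (k : ℝ) ≤ 2 ^ k := by exact_mod_cast (Nat.lt_two_pow_self (n := k)).le
  have h1 : (1 : ℝ) ≤ 2 ^ k := one_le_pow₀ (by norm_num)
  have : ‖ν + 2 * (k : ℂ)‖ ≤ (‖ν‖ + 2) * 2 ^ k := by
    calc ‖ν + 2 * (k : ℂ)‖ ≤ ‖ν‖ + ‖2 * (k : ℂ)‖ := norm_add_le _ _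
      _ = ‖ν‖ + 2 * k := by simp
      _ ≤ (‖ν‖ + 2) * 2 ^ k := by nlinarith [norm_nonneg ν]
  rw [norm_mul, mul_pow]
  calc ‖ν + 2 * (k : ℂ)‖ * ‖c k‖ * r ^ k ≤ ((‖ν‖ + 2) * 2 ^ k) * ‖c k‖ * r ^ k := by gcongr
    _ = _ := by ring

lemma norm_term {ν : ℂ} (hν : ν.re = 0) (k : ℕ) (t : ℝ) :
    ‖Complex.exp ((ν + 2 * k) * (t : ℂ))‖ = (Real.exp (2 * t)) ^ k := by
  rw [Complex.norm_exp, ← Real.exp_nat_mul]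
  congr 1
  simp [hν]
  ring

lemma PCoef.summable {c : ℕ → ℂ} (h : PCoef c) {ν : ℂ} (hν : ν.re = 0) (t : ℝ) :
    Summable (fun k : ℕ => c k * Complex.exp ((ν + 2 * k) * (t : ℂ))) := by
  refine Summable.of_norm ?_
  simpa only [norm_mul, norm_term hν] using h (Real.exp (2 * t)) (Real.exp_pos _).le

lemma gser_hasDerivAt {c : ℕ → ℂ} (h : PCoef c) {ν : ℂ} (hν : ν.re = 0) (t : ℝ) :
    HasDerivAt (gser ν c) (gser ν (fun k => (ν + 2 * k) * c k) t) t := by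
  have key := hasDerivAt_tsum_of_isPreconnected
    (g := fun (k : ℕ) (t : ℝ) => c k * Complex.exp ((ν + 2 * k) * (t : ℂ)))
    (g' := fun (k : ℕ) (t : ℝ) => ((ν + 2 * k) * c k) * Complex.exp ((ν + 2 * k) * (t : ℂ)))
    (u := fun k => ‖(ν + 2 * k) * c k‖ * (Real.exp (2 * (t + 1))) ^ k)
    (t := Set.Iio (t + 1)) (y₀ := t) (y := t)
    (h.mul ν _ (Real.exp_pos _).le) isOpen_Iio isPreconnected_Iio ?_ ?_ (by simp) ?_ (by simp)
  · exact key
  · intro k y _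
    have h1 : HasDerivAt (fun y : ℝ => (ν + 2 * k) * (y : ℂ)) (ν + 2 * k) y := by
      simpa using (Complex.ofRealCLM.hasDerivAt (x := y)).const_mul (ν + 2 * (k : ℂ))
    have h2 := (h1.cexp).const_mul (c k)
    exact h2.congr_deriv (by ring)
  · intro k y hy
    rw [norm_mul _ (Complex.exp _), norm_term hν]
    have : y ≤ t + 1 := le_of_lt hy
    gcongr
  · exact h.summable hν t

lemma gser_tendsto {c : ℕ → ℂ} (h : PCoef c) {ν : ℂ} (hν : ν.re = 0) :
    Tendsto (fun t => ‖gser ν c t‖) atBot (𝓝 ‖c 0‖) := by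
  have e : ∀ t : ℝ, ‖gser ν c t‖ = ‖∑' k : ℕ, c k * (Real.exp (2 * t) : ℂ) ^ k‖ := by
    intro t
    have : gser ν c t = Complex.exp (ν * t) * ∑' k : ℕ, c k * (Real.exp (2 * t) : ℂ) ^ k := by
      rw [gser, ← tsum_mul_left]
      congr 1; ext k
      rw [add_mul, Complex.exp_add, Complex.ofReal_exp, ← Complex.exp_nat_mul]
      have : (2 * (k : ℂ) * t) = k * ((2 * t : ℝ) : ℂ) := by push_cast; ring
      rw [this]; ring
    rw [this, norm_mul, Complex.norm_exp]
    simp [hν]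
  simp_rw [e]
  refine Tendsto.norm ?_
  have l : c 0 = ∑' k : ℕ, (if k = 0 then c 0 else 0) := by simp
  rw [l]
  refine tendsto_tsum_of_dominated_convergence (bound := fun k => ‖c k‖) ?_ ?_ ?_
  · simpa using h 1 zero_le_one
  · intro k
    have h0 : Tendsto (fun t : ℝ => (Real.exp (2 * t) : ℂ)) atBot (𝓝 0) := by
      have : Tendsto (fun t : ℝ => Real.exp (2 * t)) atBot (𝓝 0) :=
        Real.tendsto_exp_atBot.comp (tendsto_id.const_mul_atBot (by norm_num : (0 : ℝ) < 2))
      exact_mod_cast (Complex.continuous_ofReal.tendsto 0).comp this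
    by_cases hk : k = 0
    · subst hk; simp
    · simpa [hk] using (h0.pow k).const_mul (c k)
  · filter_upwards [eventually_le_atBot (0 : ℝ)] with t ht k
    rw [norm_mul, norm_pow, Complex.norm_real, Real.norm_eq_abs, Real.abs_exp]
    have : Real.exp (2 * t) ^ k ≤ 1 := pow_le_one₀ (Real.exp_pos _).le (Real.exp_le_one_iff.2 (by linarith))
    nlinarith [norm_nonneg (c k)]

/-- Bessel coefficients -/
noncomputable def bc (ν : ℂ) (k : ℕ) : ℂ :=
  (-1 : ℂ) ^ k / ((Nat.factorial k : ℂ) * Complex.Gamma (ν + k + 1))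

lemma ne_aux {ν : ℂ} (hν : ν.re = 0) (k : ℕ) : ν + k + 1 ≠ 0 := by
  intro h
  have := congrArg Complex.re h
  simp [hν] at this
  have : (0 : ℝ) ≤ k := Nat.cast_nonneg k
  linarith

lemma gam_ne {ν : ℂ} (hν : ν.re = 0) (k : ℕ) : Complex.Gamma (ν + k + 1) ≠ 0 := by
  apply Complex.Gamma_ne_zero_of_re_pos
  simp [hν]
  positivity

lemma gam_lb {ν : ℂ} (hν : ν.re = 0) (k : ℕ) :
    ‖Complex.Gamma (ν + 1)‖ ≤ ‖Complex.Gamma (ν + k + 1)‖ := by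
  induction k with
  | zero => simp
  | succ k ih =>
    have : ν + ((k + 1 : ℕ) : ℂ) + 1 = (ν + k + 1) + 1 := by push_cast; ring
    rw [this, Complex.Gamma_add_one _ (ne_aux hν k), norm_mul]
    have h1 : 1 ≤ ‖ν + k + 1‖ := by
      refine le_trans ?_ (Complex.re_le_norm _)
      simp [hν]
    nlinarith [norm_nonneg (Complex.Gamma (ν + k + 1))]

lemma bc_P {ν : ℂ} (hν : ν.re = 0) : PCoef (bc ν) := by
  intro r hr
  have h2 := (Real.summable_pow_div_factorial r).mul_left (‖Complex.Gamma (ν + 1)‖⁻¹)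
  refine Summable.of_nonneg_of_le (fun k => by positivity) (fun k => ?_) h2
  have h0 : 0 < ‖Complex.Gamma (ν + 1)‖ := norm_pos_iff.2 (by simpa using gam_ne hν 0)
  have : ‖bc ν k‖ ≤ ‖Complex.Gamma (ν + 1)‖⁻¹ * (k.factorial : ℝ)⁻¹ := by
    simp only [bc, norm_div, norm_mul, norm_pow, norm_neg, norm_one, one_pow, Complex.norm_natCast]
    rw [one_div, mul_inv, mul_comm]
    gcongr
    exact gam_lb hν k
  calc _ ≤ (‖Complex.Gamma (ν + 1)‖⁻¹ * (k.factorial : ℝ)⁻¹) * r ^ k := by gcongr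
    _ = _ := by ring

lemma bc_rec {ν : ℂ} (hν : ν.re = 0) (k : ℕ) :
    ((k : ℂ) + 1) * (ν + k + 1) * bc ν (k + 1) = - bc ν k := by
  have e : ν + ((k + 1 : ℕ) : ℂ) + 1 = (ν + k + 1) + 1 := by push_cast; ring
  have h1 := ne_aux hν k
  have h2 := gam_ne hν k
  have h3 : (k : ℂ) + 1 ≠ 0 := Nat.cast_add_one_ne_zero k
  have h4 : (k.factorial : ℂ) ≠ 0 := by exact_mod_cast k.factorial_ne_zero
  rw [bc, bc, e, Complex.Gamma_add_one _ h1, Nat.factorial_succ, pow_succ]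
  push_cast
  field_simp

lemma bessel_gser (ν : ℂ) (x : ℝ) : besselJ ν x = gser ν (bc ν) (Real.log (x / 2)) := by
  rw [besselJ, gser]
  congr 1; ext k
  rw [bc]; ring

lemma bessel_ode {ν : ℂ} (hν : ν.re = 0) (t : ℝ) :
    gser ν (fun k => (ν + 2 * k) * ((ν + 2 * k) * bc ν k)) t
      = (ν ^ 2 - 4 * (Real.exp (2 * t) : ℂ)) * gser ν (bc ν) t := by
  have hs := (bc_P hν).summable hν t
  have hs2 := ((bc_P hν).mul ν).mul ν |>.summable hν t
  have hd : Summable (fun k : ℕ => 4 * (k * (ν + k)) * bc ν k * Complex.exp ((ν + 2 * k) * (t : ℂ))) := by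
    refine (hs2.sub (hs.mul_left (ν ^ 2))).congr (fun k => ?_)
    ring
  have h1 : gser ν (fun k => (ν + 2 * k) * ((ν + 2 * k) * bc ν k)) t
      = ν ^ 2 * gser ν (bc ν) t +
        ∑' k : ℕ, 4 * (k * (ν + k)) * bc ν k * Complex.exp ((ν + 2 * k) * (t : ℂ)) := by
    rw [gser, gser, ← tsum_mul_left, ← (hs.mul_left (ν ^ 2)).tsum_add hd]
    congr 1; ext k; ring
  have h2 : ∑' k : ℕ, 4 * (k * (ν + k)) * bc ν k * Complex.exp ((ν + 2 * k) * (t : ℂ))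
      = - 4 * (Real.exp (2 * t) : ℂ) * gser ν (bc ν) t := by
    rw [hd.tsum_eq_zero_add, gser, ← tsum_mul_left]
    simp only [Nat.cast_zero, zero_mul, mul_zero, zero_add]
    congr 1; ext k
    have e : Complex.exp ((ν + 2 * ((k + 1 : ℕ) : ℂ)) * (t : ℂ))
        = (Real.exp (2 * t) : ℂ) * Complex.exp ((ν + 2 * k) * (t : ℂ)) := by
      rw [Complex.ofReal_exp, ← Complex.exp_add]
      congr 1; push_cast; ring
    rw [e]
    have r := bc_rec hν k
    rw [Nat.cast_add, Nat.cast_one]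
    linear_combination 4 * ((Real.exp (2 * t) : ℂ) * Complex.exp ((ν + 2 * k) * (t : ℂ))) * r
  rw [h1, h2]; ring

lemma energy1 {w w' : ℝ → ℂ} {Q Q' : ℝ → ℝ} (hw : ∀ t, HasDerivAt w (w' t) t)
    (hw' : ∀ t, HasDerivAt w' (-(Q t) • w t) t) (hQ : ∀ t, HasDerivAt Q (Q' t) t)
    (hpos : ∀ t, 0 < Q t) (hQ' : ∀ t, 0 ≤ Q' t) :
    Antitone (fun t => ‖w' t‖ ^ 2 / Q t + ‖w t‖ ^ 2) := by
  refine antitone_of_hasDerivAt_nonpos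
    (f' := fun t => - (‖w' t‖ ^ 2 * Q' t / Q t ^ 2)) (fun t => ?_) (fun t => ?_)
  · have h := ((hw' t).norm_sq.div (hQ t) (hpos t).ne').add (hw t).norm_sq
    refine h.congr_deriv ?_
    rw [real_inner_smul_right, real_inner_comm (w' t) (w t)]
    have := (hpos t).ne'
    field_simp
    ring
  · have := hpos t
    have := hQ' t
    have : 0 ≤ ‖w' t‖ ^ 2 * Q' t / Q t ^ 2 := by positivity
    simpa using this

lemma energy2 {w w' : ℝ → ℂ} {m : ℝ} (hw : ∀ t, HasDerivAt w (w' t) t)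
    (hw' : ∀ t, HasDerivAt w' (-(m ^ 2 + 4 * Real.exp (2 * t)) • w t) t) :
    Antitone (fun t => Real.exp (-t) * ‖w' t + (1 / 2 : ℝ) • w t‖ ^ 2 +
      (4 * Real.exp t + (m ^ 2 + 1 / 4) * Real.exp (-t)) * ‖w t‖ ^ 2) := by
  refine antitone_of_hasDerivAt_nonpos
    (f' := fun t => - (2 * (m ^ 2 + 1 / 4) * Real.exp (-t) * ‖w t‖ ^ 2)) (fun t => ?_) (fun t => ?_)
  · have e1 : HasDerivAt (fun t : ℝ => Real.exp (-t)) (-Real.exp (-t)) t := by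
      simpa using (hasDerivAt_neg t).exp
    have e2 := Real.hasDerivAt_exp t
    have hv := (hw' t).add ((hw t).const_smul (1 / 2 : ℝ))
    have h := (e1.mul hv.norm_sq).add
      (((e2.const_mul 4).add (e1.const_mul (m ^ 2 + 1 / 4))).mul (hw t).norm_sq)
    refine h.congr_deriv ?_
    have ee : Real.exp (2 * t) = Real.exp t ^ 2 := by rw [← Real.exp_nat_mul]; norm_num
    have em : Real.exp (-t) * Real.exp t = 1 := by rw [← Real.exp_add]; simp
    simp only [Pi.add_apply, Pi.smul_apply, norm_add_sq_real, inner_add_left, inner_add_right, real_inner_smul_left,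
      real_inner_smul_right, real_inner_self_eq_norm_sq, norm_smul, real_inner_comm (w' t) (w t), ee]
    rw [mul_pow, Real.norm_eq_abs, sq_abs]
    set a := Real.exp (-t)
    set b := Real.exp t
    set p := ‖w t‖ ^ 2
    set q := ‖w' t‖ ^ 2
    set r := inner ℝ (w' t) (w t)
    linear_combination (-4 * b * p - 8 * b * r) * em
  · have : 0 ≤ 2 * (m ^ 2 + 1 / 4) * Real.exp (-t) * ‖w t‖ ^ 2 := by positivity
    simpa using this

lemma gamma_sq {m : ℝ} (hm : m ≠ 0) :
    ‖bc (Complex.I * m) 0‖ ^ 2 = Real.sinh (Real.pi * m) / (Real.pi * m) := by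
  have hm' : (m : ℂ) ≠ 0 := by exact_mod_cast hm
  have h1 := Complex.Gamma_mul_Gamma_one_sub (Complex.I * m)
  have h2 := Complex.Gamma_add_one (Complex.I * m) (by simp [hm])
  have h3 : Complex.Gamma (1 - Complex.I * m) = starRingEnd ℂ (Complex.Gamma (Complex.I * m + 1)) := by
    rw [← Complex.Gamma_conj]; congr 1; simp; ring
  have h4 : Complex.sin (Real.pi * (Complex.I * m)) = Real.sinh (Real.pi * m) * Complex.I := by
    rw [show (Real.pi : ℂ) * (Complex.I * m) = ((Real.pi * m : ℝ) : ℂ) * Complex.I by push_cast; ring,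
      Complex.sin_mul_I, Complex.ofReal_sinh]
  have hs : Real.sinh (Real.pi * m) ≠ 0 := by
    rw [Ne, Real.sinh_eq_zero]; exact mul_ne_zero Real.pi_ne_zero hm
  have hs' : (Real.sinh (Real.pi * m) : ℂ) ≠ 0 := by exact_mod_cast hs
  have h5 : ((‖Complex.Gamma (Complex.I * m + 1)‖ ^ 2 : ℝ) : ℂ)
      = ((Real.pi * m / Real.sinh (Real.pi * m) : ℝ) : ℂ) := by
    have : ((‖Complex.Gamma (Complex.I * m + 1)‖ ^ 2 : ℝ) : ℂ) =
        Complex.Gamma (Complex.I * m + 1) * starRingEnd ℂ (Complex.Gamma (Complex.I * m + 1)) := by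
      rw [Complex.mul_conj, Complex.normSq_eq_norm_sq]
    rw [this, ← h3, h2, mul_assoc, h1, h4, Complex.ofReal_div, Complex.ofReal_mul]
    have := Complex.I_ne_zero
    field_simp
  have h6 := Complex.ofReal_injective h5
  simp only [bc, pow_zero, Nat.factorial_zero, Nat.cast_one, one_mul, Nat.cast_zero, add_zero,
    one_div]
  rw [norm_inv, inv_pow, h6, inv_div]

lemma J_bound {m : ℝ} (hm : m ≠ 0) (x : ℝ) (hx : 0 < x) :
    ‖besselJ (Complex.I * m) x‖ ^ 2 ≤ 2 * (Real.sinh (Real.pi * m) / (Real.pi * m)) ∧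
    (2 ≤ x → 2 * x * ‖besselJ (Complex.I * m) x‖ ^ 2 ≤
      (3 * m ^ 2 + 13) * (2 * (Real.sinh (Real.pi * m) / (Real.pi * m)))) := by
  set ν : ℂ := Complex.I * m with hνd
  have hν : ν.re = 0 := by simp [ν]
  set w := gser ν (bc ν) with hwd
  set w' := gser ν (fun k => (ν + 2 * k) * bc ν k) with hwd'
  have hw : ∀ t, HasDerivAt w (w' t) t := gser_hasDerivAt (bc_P hν) hν
  have hw' : ∀ t, HasDerivAt w' (-(m ^ 2 + 4 * Real.exp (2 * t)) • w t) t := by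
    intro t
    refine (gser_hasDerivAt ((bc_P hν).mul ν) hν t).congr_deriv ?_
    rw [bessel_ode hν t, Complex.real_smul, hνd, mul_pow, Complex.I_sq]
    simp only [Complex.ofReal_neg, Complex.ofReal_add, Complex.ofReal_mul, Complex.ofReal_pow, Complex.ofReal_ofNat, w]
    ring
  have m2 : 0 < m ^ 2 := by positivity
  have hQ : ∀ t, HasDerivAt (fun t => m ^ 2 + 4 * Real.exp (2 * t)) (8 * Real.exp (2 * t)) t := by
    intro t
    have := ((((hasDerivAt_id t).const_mul 2).exp).const_mul 4).const_add (m ^ 2)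
    refine this.congr_deriv ?_
    simp; ring
  have E1 := energy1 hw hw' hQ (fun t => by positivity) (fun t => by positivity)
  have E2 := energy2 hw hw'
  set A := 2 * (Real.sinh (Real.pi * m) / (Real.pi * m)) with hA
  have lim : Tendsto (fun t => ‖w' t‖ ^ 2 / (m ^ 2 + 4 * Real.exp (2 * t)) + ‖w t‖ ^ 2) atBot (𝓝 A) := by
    have l1 := gser_tendsto (bc_P hν) hν
    have l2 := gser_tendsto ((bc_P hν).mul ν) hν
    have l0 : Tendsto (fun t : ℝ => Real.exp (2 * t)) atBot (𝓝 0) :=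
        Real.tendsto_exp_atBot.comp (tendsto_id.const_mul_atBot (by norm_num : (0 : ℝ) < 2))
    have := ((l2.pow 2).div ((l0.const_mul 4).const_add (m ^ 2)) (by simpa using hm)).add (l1.pow 2)
    have n1 : ‖ν‖ ^ 2 = m ^ 2 := by simp [ν]
    have lv : ‖(ν + 2 * ((0 : ℕ) : ℂ)) * bc ν 0‖ ^ 2 / (m ^ 2 + 4 * 0) + ‖bc ν 0‖ ^ 2 = A := by
      rw [Nat.cast_zero, mul_zero, add_zero, mul_zero, add_zero, norm_mul, mul_pow, n1,
        gamma_sq hm, hA, mul_div_cancel_left₀ _ m2.ne']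
      ring
    rw [lv] at this
    exact this
  have bd : ∀ t, ‖w' t‖ ^ 2 / (m ^ 2 + 4 * Real.exp (2 * t)) + ‖w t‖ ^ 2 ≤ A := fun t =>
    ge_of_tendsto lim ((eventually_le_atBot t).mono fun s hs => E1 hs)
  have bw : ∀ t, ‖w t‖ ^ 2 ≤ A := fun t => by
    have := bd t
    have : 0 ≤ ‖w' t‖ ^ 2 / (m ^ 2 + 4 * Real.exp (2 * t)) := by positivity
    linarith
  rw [bessel_gser]
  refine ⟨bw _, fun hx2 => ?_⟩
  have ht : 0 ≤ Real.log (x / 2) := Real.log_nonneg (by linarith)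
  have h := E2 ht
  have b0 := bd 0
  have ex : Real.exp (Real.log (x / 2)) = x / 2 := Real.exp_log (by positivity)
  simp only [ex, neg_zero, Real.exp_zero, mul_one, one_mul, mul_zero] at h b0
  rw [← hwd]
  set W := ‖w (Real.log (x / 2))‖ ^ 2
  have p1 : 0 ≤ Real.exp (-Real.log (x / 2)) * ‖w' (Real.log (x / 2)) + (1 / 2 : ℝ) • w (Real.log (x / 2))‖ ^ 2 := by positivity
  have p2 : 0 ≤ (m ^ 2 + 1 / 4) * Real.exp (-Real.log (x / 2)) * W := by positivity
  have q1 : ‖w' 0 + (1 / 2 : ℝ) • w 0‖ ^ 2 ≤ 2 * ‖w' 0‖ ^ 2 + 1 / 2 * ‖w 0‖ ^ 2 := by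
    have := norm_add_le (w' 0) ((1 / 2 : ℝ) • w 0)
    rw [norm_smul, Real.norm_eq_abs, abs_of_pos (by norm_num : (0 : ℝ) < 1 / 2)] at this
    have n := norm_nonneg (w' 0 + (1 / 2 : ℝ) • w 0)
    nlinarith [sq_nonneg (‖w' 0‖ - 1 / 2 * ‖w 0‖)]
  have q2 : ‖w' 0‖ ^ 2 + (m ^ 2 + 4) * ‖w 0‖ ^ 2 ≤ A * (m ^ 2 + 4) := by
    have : ‖w' 0‖ ^ 2 + (m ^ 2 + 4) * ‖w 0‖ ^ 2 = (‖w' 0‖ ^ 2 / (m ^ 2 + 4) + ‖w 0‖ ^ 2) * (m ^ 2 + 4) := by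
      field_simp
    rw [this]; gcongr
  have q3 := bw 0
  have A0 : 0 ≤ A := (sq_nonneg _).trans q3
  nlinarith [mul_nonneg m2.le A0, mul_nonneg m2.le (sq_nonneg ‖w 0‖), sq_nonneg ‖w 0‖]

lemma final_arith {F x m : ℝ} (hF : 0 ≤ F) (hx : 0 < x) (hm : 1 / 2 ≤ m)
    (h1 : F ≤ 7 / m) (h2 : 2 ≤ x → 2 * x * F ≤ (3 * m ^ 2 + 13) * (7 / m)) :
    F ≤ 100 * x ^ (-(1 / 4 : ℝ)) := by
  have m0 : 0 < m := by linarith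
  have F14 : F ≤ 14 := h1.trans (by rw [div_le_iff₀ m0]; linarith)
  have key : F ^ 4 * x ≤ 100 ^ 4 := by
    rcases le_total x 2 with h | h
    · have : F ^ 4 ≤ 14 ^ 4 := by gcongr
      nlinarith
    · have a : 2 * x * F * F ≤ (3 * m ^ 2 + 13) * (7 / m) * (7 / m) :=
        mul_le_mul (h2 h) h1 hF (by positivity)
      have b : (3 * m ^ 2 + 13) * (7 / m) * (7 / m) ≤ 49 * 55 := by
        have : (3 * m ^ 2 + 13) * (7 / m) * (7 / m) = 49 * (3 * m ^ 2 + 13) / m ^ 2 := by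
          field_simp; ring
        rw [this, div_le_iff₀ (by positivity)]
        nlinarith
      have c : F ^ 2 ≤ 14 ^ 2 := by gcongr
      have d : 0 ≤ F ^ 2 * x := by positivity
      have e : F ^ 2 * x ≤ 49 * 55 := by nlinarith
      have : F ^ 4 * x = F ^ 2 * (F ^ 2 * x) := by ring
      nlinarith
  have xp : 0 < x ^ (1 / 4 : ℝ) := Real.rpow_pos_of_pos hx _
  rw [Real.rpow_neg hx.le, ← div_eq_mul_inv, le_div_iff₀ xp]
  refine le_of_pow_le_pow_left₀ (n := 4) (by norm_num) (by norm_num) ?_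
  rw [mul_pow, ← Real.rpow_natCast (x ^ (1 / 4 : ℝ)) 4, ← Real.rpow_mul hx.le]
  norm_num
  norm_num at key
  exact key

lemma hyp_bound {y : ℝ} (hy : 1 ≤ y) :
    (2 * Real.cosh y + 2) / Real.sinh y ^ 2 * (2 * Real.sinh y) ≤ 20 := by
  have hs : y ≤ Real.sinh y := Real.self_le_sinh_iff.2 (by linarith)
  have hc := Real.cosh_sq y
  have cp := Real.cosh_pos y
  have c1 : 5 / 4 ≤ Real.cosh y := by nlinarith
  have hsc : Real.sinh y ≤ Real.cosh y := (Real.sinh_lt_cosh y).le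
  have s0 : 0 < Real.sinh y := by linarith
  have : (2 * Real.cosh y + 2) / Real.sinh y ^ 2 * (2 * Real.sinh y) = 4 * (Real.cosh y + 1) / Real.sinh y := by
    field_simp; ring
  rw [this, div_le_iff₀ s0]
  -- S^2 = (C-1)(C+1)
  have k : Real.sinh y * (Real.cosh y + 1) ≤ 5 * Real.sinh y * Real.sinh y := by nlinarith
  nlinarith

theorem statement11 :
    ∃ B : ℝ, 0 < B ∧ ∀ x : ℝ, 0 < x → ∀ n : ℕ, 1 ≤ n →
      ‖(besselJ (Complex.I * n / 2) x) ^ 2 + (besselY (Complex.I * n / 2) x) ^ 2‖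
        ≤ B * x ^ (-(1 / 4 : ℝ)) := by
  refine ⟨100, by norm_num, fun x hx n hn => ?_⟩
  have hn' : (1 : ℝ) ≤ n := by exact_mod_cast hn
  set m : ℝ := n / 2 with hmd
  have hm : 1 / 2 ≤ m := by rw [hmd]; linarith
  have m0 : 0 < m := by linarith
  have e : Complex.I * n / 2 = Complex.I * m := by rw [hmd]; push_cast; ring
  rw [e]
  have hy : 1 ≤ Real.pi * m := by nlinarith [Real.pi_gt_three]
  have y0 : 0 < Real.pi * m := by linarith
  have hyp := hyp_bound hy
  set y := Real.pi * m with hyd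
  have s0 : 0 < Real.sinh y := Real.sinh_pos_iff.2 y0
  have J1 := J_bound m0.ne' x hx
  have J2 := J_bound (neg_ne_zero.2 m0.ne') x hx
  rw [Complex.ofReal_neg, mul_neg, mul_neg, Real.sinh_neg, neg_div_neg_eq, neg_sq] at J2
  rw [← hyd] at J1 J2
  have hsin : Complex.sin (Real.pi * (Complex.I * m)) = Real.sinh y * Complex.I := by
    rw [show (Real.pi : ℂ) * (Complex.I * m) = (y : ℂ) * Complex.I by rw [hyd]; push_cast; ring,
      Complex.sin_mul_I, Complex.ofReal_sinh]
  have hcos : Complex.cos (Real.pi * (Complex.I * m)) = Real.cosh y := by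
    rw [show (Real.pi : ℂ) * (Complex.I * m) = (y : ℂ) * Complex.I by rw [hyd]; push_cast; ring,
      Complex.cos_mul_I, Complex.ofReal_cosh]
  rw [besselY, hsin, hcos]
  set a := besselJ (Complex.I * m) x
  set b := besselJ (-(Complex.I * m)) x
  have hs' : (Real.sinh y : ℂ) ≠ 0 := by exact_mod_cast s0.ne'
  have hcs : (Real.cosh y : ℂ) ^ 2 = (Real.sinh y : ℂ) ^ 2 + 1 := by exact_mod_cast Real.cosh_sq y
  have id1 : a ^ 2 + ((a * (Real.cosh y : ℂ) - b) / ((Real.sinh y : ℂ) * Complex.I)) ^ 2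
      = (2 * (Real.cosh y : ℂ) * a * b - a ^ 2 - b ^ 2) / (Real.sinh y : ℂ) ^ 2 := by
    rw [div_pow, mul_pow, Complex.I_sq]
    generalize (Real.sinh y : ℂ) = S at *
    generalize (Real.cosh y : ℂ) = C at *
    field_simp
    linear_combination (-a ^ 2) * hcs
  rw [id1]
  set C := Real.cosh y
  set S := Real.sinh y
  have C0 : 0 < C := Real.cosh_pos y
  have nb : ∀ A : ℝ, ‖a‖ ^ 2 ≤ A → ‖b‖ ^ 2 ≤ A →
      ‖(2 * (C : ℂ) * a * b - a ^ 2 - b ^ 2) / (S : ℂ) ^ 2‖ ≤ (2 * C + 2) / S ^ 2 * A := by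
    intro A ha hb
    rw [norm_div, norm_pow, Complex.norm_real, Real.norm_eq_abs, abs_of_pos s0, div_mul_eq_mul_div]
    gcongr
    have t1 : ‖2 * (C : ℂ) * a * b - a ^ 2 - b ^ 2‖ ≤ 2 * C * ‖a‖ * ‖b‖ + ‖a‖ ^ 2 + ‖b‖ ^ 2 := by
      refine (norm_sub_le _ _).trans ?_
      refine (add_le_add_left (norm_sub_le _ _) _).trans ?_
      simp [abs_of_pos C0]
    have t2 : ‖a‖ * ‖b‖ ≤ A := by nlinarith [sq_nonneg (‖a‖ - ‖b‖)]
    nlinarith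
  have yb : 20 / y ≤ 7 / m := by
    rw [div_le_div_iff₀ y0 m0, hyd]; nlinarith [Real.pi_gt_three]
  have K : (2 * C + 2) / S ^ 2 * (2 * (S / y)) ≤ 7 / m := by
    refine le_trans ?_ yb
    rw [show (2 * C + 2) / S ^ 2 * (2 * (S / y)) = ((2 * C + 2) / S ^ 2 * (2 * S)) / y by ring]
    gcongr
  refine final_arith (norm_nonneg _) hx hm ((nb _ J1.1 J2.1).trans K) (fun h2 => ?_)
  have x2 : 0 < 2 * x := by linarith
  have := nb ((3 * m ^ 2 + 13) * (2 * (S / y)) / (2 * x))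
    (by rw [le_div_iff₀ x2]; linarith [J1.2 h2]) (by rw [le_div_iff₀ x2]; linarith [J2.2 h2])
  calc 2 * x * _ ≤ 2 * x * ((2 * C + 2) / S ^ 2 * ((3 * m ^ 2 + 13) * (2 * (S / y)) / (2 * x))) := by gcongr
    _ = (3 * m ^ 2 + 13) * ((2 * C + 2) / S ^ 2 * (2 * (S / y))) := by field_simp
    _ ≤ _ := by gcongr
end

section
/- For every x > 0 and every n ∈ ℕ, n ≥ 1, |Re[J_{in/2}(x)²]| / cosh(πn/2) ≤ (2·e^{2x}/(πn)) · tanh(πn/2), and in particular |Re[J_{in/2}(x)²]| / cosh(πn/2) ≤ 2·e^{2x}/(πn). -/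
open MeasureTheory Filter Topology

theorem aux_gamma_lower (y : ℝ) (k : ℕ) :
    (Nat.factorial k : ℝ) * ‖Complex.Gamma (Complex.I * y + 1)‖ ≤
      ‖Complex.Gamma (Complex.I * y + k + 1)‖ := by
  induction k with
  | zero => simp
  | succ k ih =>
    have hne : Complex.I * y + k + 1 ≠ 0 := by
      intro h
      have := congrArg Complex.re h
      simp at this
      linarith [(Nat.cast_nonneg k : (0 : ℝ) ≤ k)]
    have h1 : Complex.Gamma (Complex.I * y + (k + 1 : ℕ) + 1) =
        (Complex.I * y + k + 1) * Complex.Gamma (Complex.I * y + k + 1) := by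
      rw [← Complex.Gamma_add_one _ hne]
      push_cast
      ring_nf
    have h2 : (k + 1 : ℝ) ≤ ‖Complex.I * y + k + 1‖ := by
      have := Complex.re_le_norm (Complex.I * y + k + 1)
      simpa using this
    rw [h1, norm_mul, Nat.factorial_succ]
    push_cast
    rw [mul_assoc]
    exact mul_le_mul h2 ih (by positivity) (by positivity)

theorem aux_gamma_norm (y : ℝ) (hy : 0 < y) :
    ‖Complex.Gamma (Complex.I * y + 1)‖ ^ 2 = Real.pi * y / Real.sinh (Real.pi * y) := by
  have hyc : (y : ℂ) ≠ 0 := by exact_mod_cast hy.ne'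
  have hz : Complex.I * (y : ℂ) ≠ 0 := mul_ne_zero Complex.I_ne_zero hyc
  have h1 := Complex.Gamma_mul_Gamma_one_sub (Complex.I * y)
  have hc : Complex.Gamma (1 - Complex.I * y) =
      (starRingEnd ℂ) (Complex.Gamma (Complex.I * y + 1)) := by
    rw [← Complex.Gamma_conj]
    congr 1
    simp
    ring
  have hs : Complex.sin (Real.pi * (Complex.I * y)) =
      ((Real.sinh (Real.pi * y) : ℝ) : ℂ) * Complex.I := by
    rw [show (Real.pi : ℂ) * (Complex.I * y) = ((Real.pi * y : ℝ) : ℂ) * Complex.I by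
      push_cast; ring, Complex.sin_mul_I, Complex.ofReal_sinh]
  have hsp : 0 < Real.sinh (Real.pi * y) := Real.sinh_pos_iff.2 (by positivity)
  have hsc : ((Real.sinh (Real.pi * y) : ℝ) : ℂ) ≠ 0 := by exact_mod_cast hsp.ne'
  have h2 : Complex.Gamma (Complex.I * y + 1) *
      (starRingEnd ℂ) (Complex.Gamma (Complex.I * y + 1)) =
      ((Real.pi * y / Real.sinh (Real.pi * y) : ℝ) : ℂ) := by
    rw [← hc, Complex.Gamma_add_one _ hz, mul_assoc, h1, hs, Complex.ofReal_div,
      Complex.ofReal_mul]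
    have := Complex.I_ne_zero
    field_simp
  rw [Complex.mul_conj, Complex.normSq_eq_norm_sq] at h2
  exact_mod_cast h2

theorem aux_J_bound (x : ℝ) (hx : 0 < x) (y : ℝ) (hy : 0 < y) :
    ‖besselJ (Complex.I * y) x‖ ≤ Real.exp x / ‖Complex.Gamma (Complex.I * y + 1)‖ := by
  set G := ‖Complex.Gamma (Complex.I * y + 1)‖ with hG
  have hGp : 0 < G := by
    have h := aux_gamma_norm y hy
    have hsp : 0 < Real.sinh (Real.pi * y) := Real.sinh_pos_iff.2 (by positivity)
    have h3 : 0 < G ^ 2 := by rw [h]; positivity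
    exact lt_of_le_of_ne (norm_nonneg _) fun h0 => by rw [← h0] at h3; norm_num at h3
  have hsum : HasSum (fun k : ℕ => x ^ (2 * k) / (Nat.factorial (2 * k) : ℝ) / G)
      (Real.cosh x / G) := (Real.hasSum_cosh x).div_const G
  have hb : ‖besselJ (Complex.I * y) x‖ ≤ Real.cosh x / G := by
    unfold besselJ
    refine tsum_of_norm_bounded hsum fun k => ?_
    have he : ‖Complex.exp ((Complex.I * y + 2 * k) * (Real.log (x / 2) : ℂ))‖ =
        (x / 2) ^ (2 * k) := by
      rw [Complex.norm_exp]
      have : ((Complex.I * y + 2 * k) * (Real.log (x / 2) : ℂ)).re =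
          ((2 * k : ℕ) : ℝ) * Real.log (x / 2) := by
        simp
      rw [this, Real.exp_nat_mul, Real.exp_log (by positivity)]
    rw [norm_div, norm_mul, norm_mul, he, norm_pow, norm_neg, norm_one, one_pow, one_mul,
      Complex.norm_natCast]
    have hk := aux_gamma_lower y k
    rw [← hG] at hk
    have hf : (0 : ℝ) < Nat.factorial k := by exact_mod_cast Nat.factorial_pos k
    have hf2 : (0 : ℝ) < Nat.factorial (2 * k) := by exact_mod_cast Nat.factorial_pos (2 * k)
    have hcb : (Nat.factorial (2 * k) : ℝ) ≤ 4 ^ k * (Nat.factorial k * Nat.factorial k) := by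
      have h1 := Nat.choose_mul_factorial_mul_factorial (show k ≤ 2 * k by omega)
      rw [show 2 * k - k = k by omega] at h1
      have h2 : (2 * k).choose k ≤ 4 ^ k := by
        have := Nat.choose_le_two_pow (2 * k) k
        rwa [pow_mul] at this
      have h3 : Nat.factorial (2 * k) ≤ 4 ^ k * (Nat.factorial k * Nat.factorial k) := by
        rw [← h1, mul_assoc]
        exact Nat.mul_le_mul_right _ h2
      exact_mod_cast h3
    calc (x / 2) ^ (2 * k) / (Nat.factorial k * ‖Complex.Gamma (Complex.I * y + k + 1)‖)
        ≤ (x / 2) ^ (2 * k) / (Nat.factorial k * (Nat.factorial k * G)) := by gcongr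
      _ = x ^ (2 * k) / (4 ^ k * (Nat.factorial k * Nat.factorial k)) / G := by
        rw [div_pow, pow_mul 2 2 k]
        norm_num
        field_simp
      _ ≤ x ^ (2 * k) / (Nat.factorial (2 * k) : ℝ) / G := by gcongr
  refine hb.trans ?_
  gcongr
  rw [Real.cosh_eq]
  have : Real.exp (-x) ≤ Real.exp x := Real.exp_le_exp.2 (by linarith)
  linarith

theorem statement12 (x : ℝ) (hx : 0 < x) (n : ℕ) (hn : 1 ≤ n) :
    |((besselJ (Complex.I * n / 2) x) ^ 2).re| / Real.cosh (Real.pi * n / 2)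
      ≤ (2 * Real.exp (2 * x) / (Real.pi * n)) * Real.tanh (Real.pi * n / 2) ∧
    |((besselJ (Complex.I * n / 2) x) ^ 2).re| / Real.cosh (Real.pi * n / 2)
      ≤ 2 * Real.exp (2 * x) / (Real.pi * n) := by
  have hnp : (0 : ℝ) < n := by exact_mod_cast hn
  have hC := Real.cosh_pos (Real.pi * n / 2)
  have hS : 0 < Real.sinh (Real.pi * n / 2) := Real.sinh_pos_iff.2 (by positivity)
  have key : |((besselJ (Complex.I * n / 2) x) ^ 2).re| / Real.cosh (Real.pi * n / 2)
      ≤ (2 * Real.exp (2 * x) / (Real.pi * n)) * Real.tanh (Real.pi * n / 2) := by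
    have e : Complex.I * n / 2 = Complex.I * ((n / 2 : ℝ) : ℂ) := by
      push_cast
      ring
    have hy : (0 : ℝ) < n / 2 := by positivity
    have h1 := aux_J_bound x hx (n / 2) hy
    have h2 := aux_gamma_norm (n / 2) hy
    have h3 : |((besselJ (Complex.I * n / 2) x) ^ 2).re| ≤
        2 * Real.exp (2 * x) / (Real.pi * n) * Real.sinh (Real.pi * n / 2) := by
      refine (Complex.abs_re_le_norm _).trans ?_
      rw [norm_pow, e]
      refine (pow_le_pow_left₀ (norm_nonneg _) h1 2).trans (le_of_eq ?_)
      rw [div_pow, h2, ← mul_div_assoc, two_mul x, Real.exp_add]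
      field_simp
    rw [Real.tanh_eq_sinh_div_cosh, ← mul_div_assoc]
    gcongr
  refine ⟨key, key.trans ?_⟩
  refine mul_le_of_le_one_right (by positivity) ?_
  exact (Real.tanh_lt_one _).le
end

section
/- For every x > 0 and every n ∈ ℕ, n ≥ 1, |Im[J_{in/2}(x)²]| / sinh(πn/2) ≤ 2·e^{2x}/(πn). -/
open MeasureTheory Filter Topology

lemma aux_gamma (t : ℝ) (k : ℕ) :
    (k.factorial : ℝ) * ‖Complex.Gamma (Complex.I * t + 1)‖ ≤
      ‖Complex.Gamma (Complex.I * t + k + 1)‖ := by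
  induction k with
  | zero => simp
  | succ k ih =>
    have hre : (Complex.I * t + k + 1 : ℂ).re = k + 1 := by simp
    have hne : (Complex.I * t + k + 1 : ℂ) ≠ 0 := by
      intro h
      rw [h] at hre
      simp only [Complex.zero_re] at hre
      have : (0:ℝ) ≤ k := Nat.cast_nonneg k
      linarith
    have h1 : ((k:ℝ) + 1) ≤ ‖(Complex.I * t + k + 1 : ℂ)‖ := by
      rw [← hre]; exact Complex.re_le_norm _
    have e : (Complex.I * t + ((k + 1 : ℕ) : ℂ) + 1 : ℂ) = (Complex.I * t + k + 1) + 1 := by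
      push_cast; ring
    rw [e, Complex.Gamma_add_one _ hne, norm_mul, Nat.factorial_succ]
    push_cast
    rw [mul_assoc]
    exact mul_le_mul h1 ih (by positivity) (norm_nonneg _)

lemma aux_gamma_sq (t : ℝ) (ht : 0 < t) :
    ‖Complex.Gamma (Complex.I * t + 1)‖ ^ 2 = Real.pi * t / Real.sinh (Real.pi * t) := by
  have hne : (Complex.I * t : ℂ) ≠ 0 := by
    simp [ht.ne']
  have hs : Real.sinh (Real.pi * t) ≠ 0 :=
    (Real.sinh_pos_iff.2 (by positivity)).ne'
  have hc : (starRingEnd ℂ) (Complex.Gamma (Complex.I * t + 1))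
      = Complex.Gamma (1 - Complex.I * t) := by
    rw [← Complex.Gamma_conj]; congr 1; simp; ring
  have hsin : Complex.sin (Real.pi * (Complex.I * t))
      = (Real.sinh (Real.pi * t) : ℂ) * Complex.I := by
    rw [show (Real.pi * (Complex.I * t) : ℂ) = ((Real.pi * t : ℝ) : ℂ) * Complex.I by
      push_cast; ring, Complex.sin_mul_I, Complex.ofReal_sinh]
  have hs' : (Real.sinh (Real.pi * t) : ℂ) ≠ 0 := by exact_mod_cast hs
  have key : ((‖Complex.Gamma (Complex.I * t + 1)‖ ^ 2 : ℝ) : ℂ)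
      = ((Real.pi * t / Real.sinh (Real.pi * t) : ℝ) : ℂ) := by
    push_cast only [Complex.ofReal_pow]
    rw [← Complex.mul_conj', hc, Complex.Gamma_add_one _ hne, mul_assoc,
      Complex.Gamma_mul_Gamma_one_sub, hsin, Complex.ofReal_div, Complex.ofReal_mul]
    field_simp
  exact_mod_cast key

lemma aux_fact (k : ℕ) : ((2 * k).factorial : ℝ) ≤ 2 ^ (2 * k) * (k.factorial : ℝ) ^ 2 := by
  have h := Nat.choose_mul_factorial_mul_factorial (show k ≤ 2 * k by omega)
  rw [show 2 * k - k = k by omega] at h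
  have h2 := Nat.choose_le_two_pow (2 * k) k
  have : (2 * k).factorial ≤ 2 ^ (2 * k) * k.factorial ^ 2 := by
    rw [← h, mul_assoc, sq]
    exact Nat.mul_le_mul_right _ h2
  exact_mod_cast this

lemma aux_J (t x : ℝ) (ht : 0 < t) (hx : 0 < x) :
    ‖besselJ (Complex.I * t) x‖ ≤ Real.exp x / ‖Complex.Gamma (Complex.I * t + 1)‖ := by
  have hG : 0 < ‖Complex.Gamma (Complex.I * t + 1)‖ := by
    rw [norm_pos_iff]
    exact Complex.Gamma_ne_zero_of_re_pos (by simp)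
  refine le_trans (tsum_of_norm_bounded
    ((Real.hasSum_cosh x).div_const ‖Complex.Gamma (Complex.I * t + 1)‖) ?_) ?_
  · intro k
    have hk : (0:ℝ) < k.factorial := by exact_mod_cast k.factorial_pos
    have h2k : (0:ℝ) < (2 * k).factorial := by exact_mod_cast (2 * k).factorial_pos
    have hre : ((Complex.I * t + 2 * k) * (Real.log (x / 2) : ℂ)).re
        = ((2 * k : ℕ) : ℝ) * Real.log (x / 2) := by
      simp
    rw [norm_div, norm_mul, norm_mul, norm_pow, norm_neg, norm_one, one_pow, one_mul,
      Complex.norm_exp, hre, Real.exp_nat_mul, Real.exp_log (by positivity), Complex.norm_natCast,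
      div_div]
    have h := aux_gamma t k
    calc (x / 2) ^ (2 * k) / (k.factorial * ‖Complex.Gamma (Complex.I * t + k + 1)‖)
        ≤ (x / 2) ^ (2 * k) /
          (k.factorial * (k.factorial * ‖Complex.Gamma (Complex.I * t + 1)‖)) := by gcongr
      _ = x ^ (2 * k) / (2 ^ (2 * k) * (k.factorial : ℝ) ^ 2 *
          ‖Complex.Gamma (Complex.I * t + 1)‖) := by
        rw [div_pow]; field_simp
      _ ≤ _ := by
        gcongr
        exact aux_fact k
  · gcongr
    rw [← Real.cosh_add_sinh x]
    linarith [Real.sinh_pos_iff.2 hx]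

theorem statement13 (x : ℝ) (hx : 0 < x) (n : ℕ) (hn : 1 ≤ n) :
    |((besselJ (Complex.I * n / 2) x) ^ 2).im| / Real.sinh (Real.pi * n / 2)
      ≤ 2 * Real.exp (2 * x) / (Real.pi * n) := by
  have hn' : (0:ℝ) < n := by exact_mod_cast hn
  have ht : (0:ℝ) < (n:ℝ) / 2 := by positivity
  have hs : 0 < Real.sinh (Real.pi * (n / 2)) := Real.sinh_pos_iff.2 (by positivity)
  have e : (Complex.I * n / 2 : ℂ) = Complex.I * ((n / 2 : ℝ) : ℂ) := by push_cast; ring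
  have h := aux_J (n / 2) x ht hx
  rw [e, mul_div_assoc Real.pi, div_le_iff₀ hs]
  refine (Complex.abs_im_le_norm _).trans ?_
  rw [norm_pow]
  refine (pow_le_pow_left₀ (norm_nonneg _) h 2).trans (le_of_eq ?_)
  rw [div_pow, aux_gamma_sq _ ht, ← Real.exp_nat_mul]
  push_cast
  field_simp
end

section
/- Let ψ : ℝ → ℂ be a 2π-periodic function satisfying the Lipschitz condition |ψ(u) − ψ(v)| ≤ C·|u−v| for some constant C > 0 and all u, v ∈ ℝ. Set φ(u) = ψ(u)·sinh(2u) and define f(x) = ∫_{−π}^π (x·K₀ˢ(2x·cosh u) − 1/(π·cosh u)) · φ(u) du for x > 0. Then for every n ∈ ℕ, n ≥ 1, (1/sinh(πn/2)) · ∫₀^∞ Im[J_{in/2}(x)²] · f(x) dx = (2/(π·sinh(πn))) · ∫_{−π}^π ψ(u)·sin(nu) du. -/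
open MeasureTheory Filter Topology

noncomputable def sgS (t : ℝ) : ℝ := Real.sigmoid t * (1 - Real.sigmoid t)

lemma sgS_eq (t : ℝ) : sgS t = 1 / (2 * (Real.cosh t + 1)) := by
  have h1 : (0:ℝ) < Real.exp t := Real.exp_pos t
  rw [sgS, Real.sigmoid_def, Real.cosh_eq, Real.exp_neg]
  field_simp
  ring

lemma sgS_nonneg (t : ℝ) : 0 ≤ sgS t :=
  mul_nonneg (Real.sigmoid_nonneg t) (by linarith [Real.sigmoid_le_one t])

lemma sgS_cont : Continuous sgS := by
  unfold sgS
  exact continuous_sigmoid.mul (continuous_const.sub continuous_sigmoid)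

lemma sgS_integrable : Integrable sgS := by
  have h := (integrableOn_image_iff_integrableOn_abs_deriv_smul (s := Set.univ) (f := Real.sigmoid)
    (f' := sgS) MeasurableSet.univ (fun x _ => (Real.hasDerivAt_sigmoid x).hasDerivWithinAt)
    Real.sigmoid_injective.injOn (fun _ => (1:ℝ))).1 (by
      rw [Set.image_univ, Real.range_sigmoid]
      simp)
  rw [integrableOn_univ] at h
  refine h.congr (Eventually.of_forall fun t => ?_)
  simp [abs_of_nonneg (sgS_nonneg t)]

lemma sgS_cint (a : ℝ) : ∫ t : ℝ, (sgS t : ℂ) * Complex.exp (Complex.I * a * t) =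
    Complex.betaIntegral (1 + Complex.I * a) (1 - Complex.I * a) := by
  rw [Complex.betaIntegral, intervalIntegral.integral_of_le zero_le_one,
    integral_Ioc_eq_integral_Ioo, ← Real.range_sigmoid, ← Set.image_univ,
    integral_image_eq_integral_abs_deriv_smul (f' := sgS) MeasurableSet.univ
      (fun x _ => (Real.hasDerivAt_sigmoid x).hasDerivWithinAt)
    Real.sigmoid_injective.injOn, setIntegral_univ]
  congr 1
  ext t
  rw [abs_of_nonneg (sgS_nonneg t), Complex.real_smul]
  congr 1
  have h0 := Real.sigmoid_pos t
  have h1 := Real.sigmoid_lt_one t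
  have e1 : (1:ℂ) - (Real.sigmoid t : ℂ) = ((1 - Real.sigmoid t : ℝ) : ℂ) := by push_cast; ring
  rw [e1, Complex.cpow_def_of_ne_zero (by exact_mod_cast h0.ne'),
    Complex.cpow_def_of_ne_zero (by exact_mod_cast (by linarith : 1 - Real.sigmoid t ≠ 0)),
    ← Complex.exp_add, ← Complex.ofReal_log h0.le, ← Complex.ofReal_log (by linarith)]
  have e2 : Real.log (Real.sigmoid t) = t + Real.log (1 - Real.sigmoid t) := by
    have : Real.sigmoid t = Real.exp t * (1 - Real.sigmoid t) := by
      rw [Real.sigmoid_def, Real.exp_neg]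
      have := Real.exp_pos t
      field_simp
      ring
    conv_lhs => rw [this]
    rw [Real.log_mul (Real.exp_pos t).ne' (by linarith), Real.log_exp]
  rw [e2]
  push_cast
  congr 1
  ring

lemma beta_val (a : ℝ) (ha : a ≠ 0) :
    Complex.betaIntegral (1 + Complex.I * a) (1 - Complex.I * a) =
      ((Real.pi * a / Real.sinh (Real.pi * a) : ℝ) : ℂ) := by
  have h := Complex.Gamma_mul_Gamma_eq_betaIntegral (s := 1 + Complex.I * a)
    (t := 1 - Complex.I * a) (by simp) (by simp)
  have hne : Complex.I * a ≠ 0 := by simp [ha]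
  rw [show (1 + Complex.I * a) + (1 - Complex.I * a) = (2:ℂ) by ring, Complex.Gamma_ofNat_eq_factorial] at h
  simp only [Nat.factorial] at h
  have h2 := Complex.Gamma_add_one (Complex.I * a) hne
  rw [add_comm] at h2
  rw [h2, mul_assoc, Complex.Gamma_mul_Gamma_one_sub] at h
  have h3 : Complex.sin (Real.pi * (Complex.I * a)) = Complex.sinh (Real.pi * a) * Complex.I := by
    rw [← Complex.sin_mul_I]; congr 1; ring
  rw [h3] at h
  have h4 : Complex.sinh (Real.pi * a) ≠ 0 := by
    have : Real.sinh (Real.pi * a) ≠ 0 := by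
      rw [Ne, Real.sinh_eq_zero]; exact mul_ne_zero Real.pi_ne_zero ha
    exact_mod_cast this
  have : Complex.betaIntegral (1 + Complex.I * a) (1 - Complex.I * a) =
    Complex.I * a * (Real.pi / (Complex.sinh (Real.pi * a) * Complex.I)) := by
    rw [h]; simp
  rw [this]
  push_cast
  field_simp

lemma sgS_mul_int {g : ℝ → ℝ} (hg : Continuous g) (hb : ∀ t, |g t| ≤ 1) (u : ℝ) :
    Integrable (fun t => g t * sgS (t + u)) := by
  refine (sgS_integrable.comp_add_right u).mono'
    (hg.mul (sgS_cont.comp (by fun_prop))).aestronglyMeasurable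
    (Eventually.of_forall fun t => ?_)
  rw [norm_mul, Real.norm_eq_abs, Real.norm_eq_abs, abs_of_nonneg (sgS_nonneg _)]
  exact mul_le_of_le_one_left (sgS_nonneg _) (hb t)

lemma sgS_cos (a : ℝ) (ha : a ≠ 0) : ∫ t : ℝ, Real.cos (a * t) * sgS t =
    Real.pi * a / Real.sinh (Real.pi * a) := by
  have h := sgS_cint a
  rw [beta_val a ha] at h
  have h2 := congrArg Complex.re h
  rw [Complex.ofReal_re] at h2
  rw [← h2]
  have hI : Integrable (fun t : ℝ => (sgS t : ℂ) * Complex.exp (Complex.I * a * t)) := by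
    refine sgS_integrable.mono' ?_ (Eventually.of_forall fun t => ?_)
    · have := sgS_cont
      exact Continuous.aestronglyMeasurable (by fun_prop)
    · rw [norm_mul, Complex.norm_exp]
      simp [abs_of_nonneg (sgS_nonneg _)]
  refine Eq.trans ?_ (integral_re hI)
  congr 1
  ext t
  change _ = Complex.re _
  rw [Complex.re_ofReal_mul, mul_comm, Complex.exp_re]
  congr 1
  simp

lemma sgS_sin (a : ℝ) : ∫ t : ℝ, Real.sin (a * t) * sgS t = 0 := by
  have h : ∫ t : ℝ, Real.sin (a * (-t)) * sgS (-t) = ∫ t : ℝ, Real.sin (a * t) * sgS t :=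
    integral_neg_eq_self (fun t => Real.sin (a * t) * sgS t) volume
  have h2 : ∀ t, Real.sin (a * (-t)) * sgS (-t) = - (Real.sin (a * t) * sgS t) := by
    intro t
    rw [sgS_eq, sgS_eq, Real.cosh_neg, mul_neg, Real.sin_neg]; ring
  simp_rw [h2] at h
  rw [integral_neg] at h
  linarith

lemma sgS_shift (a u : ℝ) (ha : a ≠ 0) : ∫ t : ℝ, Real.sin (a * t) * sgS (t + u) =
    - Real.sin (a * u) * (Real.pi * a / Real.sinh (Real.pi * a)) := by
  have h := integral_add_right_eq_self (μ := volume)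
    (fun t => Real.sin (a * (t - u)) * sgS t) u
  simp only [add_sub_cancel_right] at h
  rw [h]
  have h2 : ∀ t, Real.sin (a * (t - u)) * sgS t =
      Real.cos (a * u) * (Real.sin (a * t) * sgS t) - Real.sin (a * u) * (Real.cos (a * t) * sgS t) := by
    intro t
    rw [mul_sub, Real.sin_sub]; ring
  simp_rw [h2]
  have i1 := sgS_mul_int (g := fun t => Real.sin (a * t)) (by fun_prop) (fun t => Real.abs_sin_le_one _) 0
  have i2 := sgS_mul_int (g := fun t => Real.cos (a * t)) (by fun_prop) (fun t => Real.abs_cos_le_one _) 0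
  simp only [add_zero] at i1 i2
  rw [integral_sub (i1.const_mul _) (i2.const_mul _), integral_const_mul, integral_const_mul,
    sgS_sin, sgS_cos a ha]
  ring

lemma sg_diff (t u : ℝ) : Real.sigmoid (t + u) - Real.sigmoid (t - u) =
    Real.sinh u / (Real.cosh t + Real.cosh u) := by
  have h1 := Real.exp_pos t
  have h2 := Real.exp_pos u
  have h3 : 0 < Real.cosh t + Real.cosh u := by positivity
  rw [eq_div_iff h3.ne']
  · rw [Real.sigmoid_def, Real.sigmoid_def, Real.cosh_eq, Real.cosh_eq, Real.sinh_eq]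
    simp only [Real.exp_neg, Real.exp_add, Real.exp_sub]
    field_simp
    ring

lemma inv_cosh_le (t u : ℝ) : 1 / (Real.cosh t + Real.cosh u) ≤ 2 * sgS t := by
  rw [sgS_eq]
  have := Real.one_le_cosh u
  have := Real.cosh_pos t
  rw [show 2 * (1 / (2 * (Real.cosh t + 1))) = 1 / (Real.cosh t + 1) by field_simp]
  apply one_div_le_one_div_of_le <;> linarith

lemma cosh_int {g : ℝ → ℝ} (hg : Continuous g) (hb : ∀ t, |g t| ≤ 1) (u : ℝ) :
    Integrable (fun t => g t / (Real.cosh t + Real.cosh u)) := by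
  have hpos : ∀ t, 0 < Real.cosh t + Real.cosh u := fun t => by positivity
  refine (sgS_integrable.const_mul 2).mono'
    (Continuous.aestronglyMeasurable ?_) (Eventually.of_forall fun t => ?_)
  · exact hg.div (by fun_prop) (fun t => (hpos t).ne')
  · rw [norm_div, Real.norm_eq_abs, Real.norm_eq_abs, abs_of_pos (hpos t)]
    refine le_trans ?_ (inv_cosh_le t u)
    exact div_le_div_of_nonneg_right (hb t) (hpos t).le

lemma fourier_R (a u : ℝ) (ha : a ≠ 0) :
    Real.sinh u * ∫ t : ℝ, Real.cos (a * t) / (Real.cosh t + Real.cosh u) =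
      2 * Real.pi * Real.sin (a * u) / Real.sinh (Real.pi * a) := by
  have hR : ∀ t, HasDerivAt (fun t => Real.sigmoid (t + u) - Real.sigmoid (t - u))
      (sgS (t + u) - sgS (t - u)) t := by
    intro t
    exact ((Real.hasDerivAt_sigmoid (t + u)).comp_add_const t u).sub
      ((Real.hasDerivAt_sigmoid (t - u)).comp_sub_const t u)
  have hs : ∀ t, HasDerivAt (fun t => Real.sin (a * t)) (a * Real.cos (a * t)) t := by
    intro t
    have := ((hasDerivAt_id t).const_mul a).sin
    simpa [mul_comm] using this
  have j1 := sgS_mul_int (g := fun t => Real.sin (a * t)) (by fun_prop) (fun t => Real.abs_sin_le_one _) u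
  have j2 := sgS_mul_int (g := fun t => Real.sin (a * t)) (by fun_prop) (fun t => Real.abs_sin_le_one _) (-u)
  have c1 := cosh_int (g := fun t => Real.cos (a * t)) (by fun_prop) (fun t => Real.abs_cos_le_one _) u
  have c2 := cosh_int (g := fun t => Real.sin (a * t)) (by fun_prop) (fun t => Real.abs_sin_le_one _) u
  have h := integral_mul_deriv_eq_deriv_mul_of_integrable (fun t _ => hs t) (fun t _ => hR t)
    ((j1.sub j2).congr (Eventually.of_forall fun t => by
      simp [sub_eq_add_neg]; ring))
    ((c1.const_mul (a * Real.sinh u)).congr (Eventually.of_forall fun t => by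
      simp [sg_diff]; ring))
    ((c2.const_mul (Real.sinh u)).congr (Eventually.of_forall fun t => by
      simp [sg_diff]; ring))
  have e1 : ∀ t, a * Real.cos (a * t) * (Real.sigmoid (t + u) - Real.sigmoid (t - u)) =
      a * (Real.sinh u * (Real.cos (a * t) / (Real.cosh t + Real.cosh u))) := by
    intro t; rw [sg_diff]; ring
  simp_rw [e1, mul_sub, sub_eq_add_neg] at h
  simp_rw [← sub_eq_add_neg] at h
  simp_rw [integral_const_mul] at h
  have h' : ∫ t : ℝ, (Real.sin (a * t) * sgS (t + u) - Real.sin (a * t) * sgS (t + (-u))) = 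
     -(a * (Real.sinh u * ∫ t : ℝ, Real.cos (a * t) / (Real.cosh t + Real.cosh u))) := by
    rw [← h]; congr 1
  rw [integral_sub j1 j2, sgS_shift a u ha, sgS_shift a (-u) ha, mul_neg, Real.sin_neg] at h'
  have : a * (Real.sinh u * ∫ t : ℝ, Real.cos (a * t) / (Real.cosh t + Real.cosh u)) =
     a * (2 * Real.pi * Real.sin (a * u) / Real.sinh (Real.pi * a)) := by
    linear_combination h'
  exact mul_left_cancel₀ ha this

lemma fourier_E (a u : ℝ) (ha : a ≠ 0) :
    Real.sinh u * ∫ t in Set.Ioi (0:ℝ), Real.cos (a * t) / (Real.cosh t + Real.cosh u) =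
      Real.pi * Real.sin (a * u) / Real.sinh (Real.pi * a) := by
  have h := integral_comp_abs (f := fun t => Real.cos (a * t) / (Real.cosh t + Real.cosh u))
  have h2 : ∀ t : ℝ, Real.cos (a * |t|) / (Real.cosh |t| + Real.cosh u) =
     Real.cos (a * t) / (Real.cosh t + Real.cosh u) := by
    intro t
    rw [Real.cosh_abs]
    rcases abs_choice t with h | h <;> rw [h]
    rw [mul_neg, Real.cos_neg]
  simp_rw [h2] at h
  have h3 := fourier_R a u ha
  rw [h] at h3
  linear_combination h3 / 2

lemma sinh_cosh2 (t : ℝ) : Real.cosh t ^ 2 = Real.sinh t ^ 2 + 1 := by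
  have := Real.cosh_sq t; linarith

lemma ker_deriv (y t : ℝ) : HasDerivAt (fun t => - Real.exp (-y * Real.sinh t) / Real.cosh t)
    (y * Real.exp (-y * Real.sinh t) + Real.exp (-y * Real.sinh t) * (Real.sinh t / Real.cosh t ^ 2)) t := by
  have hc := Real.cosh_pos t
  have h := ((((Real.hasDerivAt_sinh t).const_mul (-y)).exp).neg).div (Real.hasDerivAt_cosh t) hc.ne'
  refine h.congr_deriv ?_
  simp only [Pi.neg_apply]
  field_simp
  ring

lemma tendsto_sinh_top : Tendsto Real.sinh atTop atTop := by
  refine tendsto_atTop_mono' atTop ?_ tendsto_id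
  filter_upwards [eventually_ge_atTop 0] with t ht
  exact Real.self_le_sinh_iff.2 ht

lemma tendsto_cosh_top : Tendsto Real.cosh atTop atTop := by
  refine tendsto_atTop_mono (fun t => (Real.sinh_lt_cosh t).le) tendsto_sinh_top

lemma exp_sinh_le (y t : ℝ) (hy : 0 < y) (ht : 0 ≤ t) : Real.exp (-y * Real.sinh t) ≤ Real.exp (-y * t) := by
  apply Real.exp_le_exp.2
  have := Real.self_le_sinh_iff.2 ht
  nlinarith

lemma exp_sinh_int (y : ℝ) (hy : 0 < y) :
    IntegrableOn (fun t => Real.exp (-y * Real.sinh t)) (Set.Ioi 0) := by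
  refine (exp_neg_integrableOn_Ioi 0 hy).mono' (Continuous.aestronglyMeasurable (by fun_prop)) ?_
  filter_upwards [ae_restrict_mem measurableSet_Ioi] with t ht
  rw [Real.norm_eq_abs, abs_of_pos (Real.exp_pos _)]
  exact exp_sinh_le y t hy (le_of_lt ht)

lemma sdc_cont : Continuous (fun t => Real.sinh t / Real.cosh t ^ 2) :=
  Real.continuous_sinh.div (Real.continuous_cosh.pow 2) (fun t => (pow_pos (Real.cosh_pos t) 2).ne')

lemma sdc_le (t : ℝ) (ht : 0 ≤ t) : Real.sinh t / Real.cosh t ^ 2 ≤ 1 := by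
  rw [div_le_one (by positivity), sinh_cosh2]
  nlinarith [sq_nonneg (Real.sinh t - 1/2)]

lemma sdc_nonneg (t : ℝ) (ht : 0 ≤ t) : 0 ≤ Real.sinh t / Real.cosh t ^ 2 :=
  div_nonneg (Real.sinh_nonneg_iff.2 ht) (by positivity)

lemma exp_sdc_int (y : ℝ) (hy : 0 < y) :
    IntegrableOn (fun t => Real.exp (-y * Real.sinh t) * (Real.sinh t / Real.cosh t ^ 2)) (Set.Ioi 0) := by
  have := sdc_cont
  refine (exp_sinh_int y hy).mono' (Continuous.aestronglyMeasurable (by fun_prop)) ?_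
  filter_upwards [ae_restrict_mem measurableSet_Ioi] with t ht
  have ht' : 0 ≤ t := le_of_lt ht
  rw [norm_mul, Real.norm_eq_abs, abs_of_pos (Real.exp_pos _), Real.norm_eq_abs, abs_of_nonneg (sdc_nonneg t ht')]
  exact mul_le_of_le_one_right (Real.exp_pos _).le (sdc_le t ht')

lemma struve_ker (y : ℝ) (hy : 0 < y) :
    y * (∫ t in Set.Ioi (0:ℝ), Real.exp (-y * Real.sinh t)) - 1 =
      - ∫ t in Set.Ioi (0:ℝ), Real.exp (-y * Real.sinh t) * (Real.sinh t / Real.cosh t ^ 2) := by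
  have hlim : Tendsto (fun t => - Real.exp (-y * Real.sinh t) / Real.cosh t) atTop (𝓝 0) := by
    have h1 : Tendsto (fun t => Real.exp (-y * Real.sinh t)) atTop (𝓝 0) := by
      refine Real.tendsto_exp_atBot.comp ?_
      exact (tendsto_sinh_top.const_mul_atTop_of_neg (by linarith : -y < 0))
    exact h1.neg.div_atTop tendsto_cosh_top
  have h := integral_Ioi_of_hasDerivAt_of_tendsto' (a := 0) (fun t _ => ker_deriv y t)
    (((exp_sinh_int y hy).const_mul y).add (exp_sdc_int y hy)) hlim
  rw [integral_add ((exp_sinh_int y hy).const_mul y) (exp_sdc_int y hy), integral_const_mul] at h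
  simp at h
  simp
  linarith

lemma w_deriv (c C t : ℝ) (hc : 0 < c) (hC : 0 < C) :
    HasDerivAt (fun t => - (1 / (Real.cosh t * (c * Real.cosh t + Real.sqrt ((c * Real.sinh t) ^ 2 + C ^ 2)))))
    ((Real.sinh t / Real.cosh t ^ 2) / Real.sqrt ((c * Real.sinh t) ^ 2 + C ^ 2)) t := by
  have hch := Real.cosh_pos t
  have hp : 0 < (c * Real.sinh t) ^ 2 + C ^ 2 := by positivity
  set r := Real.sqrt ((c * Real.sinh t) ^ 2 + C ^ 2) with hr
  have hrp : 0 < r := Real.sqrt_pos.2 hp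
  have hr2 : r ^ 2 = (c * Real.sinh t) ^ 2 + C ^ 2 := Real.sq_sqrt hp.le
  have h1 := ((((Real.hasDerivAt_sinh t).const_mul c).pow 2).add_const (C ^ 2)).sqrt hp.ne'
  have h2 := (Real.hasDerivAt_cosh t).mul (((Real.hasDerivAt_cosh t).const_mul c).add h1)
  have hne : Real.cosh t * (c * Real.cosh t + r) ≠ 0 := by positivity
  have h3 := ((h2.inv hne).neg)
  simp only [one_div]
  refine h3.congr_deriv ?_
  simp only [Pi.add_apply, Pi.mul_apply, Pi.pow_apply, ← hr]
  have hk := sinh_cosh2 t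
  field_simp
  simp only [Nat.cast_ofNat, Nat.add_one_sub_one, pow_one]
  ring_nf

lemma w_int_aux (c C : ℝ) (hc : 0 < c) (hC : 0 < C) :
    Tendsto (fun t => - (1 / (Real.cosh t * (c * Real.cosh t + Real.sqrt ((c * Real.sinh t) ^ 2 + C ^ 2)))))
     atTop (𝓝 0) := by
  have h1 : Tendsto (fun t => c * Real.cosh t + Real.sqrt ((c * Real.sinh t) ^ 2 + C ^ 2)) atTop atTop := by
    refine tendsto_atTop_mono (fun t => ?_) (tendsto_cosh_top.const_mul_atTop hc)
    have := Real.sqrt_nonneg ((c * Real.sinh t) ^ 2 + C ^ 2)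
    linarith
  have h2 := (tendsto_cosh_top.atTop_mul_atTop₀ h1)
  have := (tendsto_inv_atTop_zero.comp h2).neg
  simpa using this

lemma w_intble (c C : ℝ) (hc : 0 < c) (hC : 0 < C) :
    IntegrableOn (fun t => (Real.sinh t / Real.cosh t ^ 2) / Real.sqrt ((c * Real.sinh t) ^ 2 + C ^ 2)) (Set.Ioi 0) :=
  integrableOn_Ioi_deriv_of_nonneg' (fun t _ => w_deriv c C t hc hC)
    (fun t ht => div_nonneg (sdc_nonneg t (le_of_lt ht)) (Real.sqrt_nonneg _)) (w_int_aux c C hc hC)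

lemma w_integral (c C : ℝ) (hc : 0 < c) (hC : 0 < C) :
    ∫ t in Set.Ioi (0:ℝ), (Real.sinh t / Real.cosh t ^ 2) / Real.sqrt ((c * Real.sinh t) ^ 2 + C ^ 2) =
      1 / (c + C) := by
  rw [integral_Ioi_of_hasDerivAt_of_tendsto' (fun t _ => w_deriv c C t hc hC) (w_intble c C hc hC)
    (w_int_aux c C hc hC)]
  simp [Real.sqrt_sq hC.le]

lemma arct_deriv (p B θ : ℝ) (hp : 0 < p) (hθ : Real.cos θ ≠ 0) :
    HasDerivAt (fun θ => Real.arctan (p * Real.tan θ / Real.sqrt (p ^ 2 + B ^ 2)) / Real.sqrt (p ^ 2 + B ^ 2))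
    (p / (p ^ 2 + B ^ 2 * Real.cos θ ^ 2)) θ := by
  have hq : 0 < p ^ 2 + B ^ 2 := by positivity
  set r := Real.sqrt (p ^ 2 + B ^ 2) with hr
  have hrp : 0 < r := Real.sqrt_pos.2 hq
  have hr2 : r ^ 2 = p ^ 2 + B ^ 2 := Real.sq_sqrt hq.le
  have h := ((((Real.hasDerivAt_tan hθ).const_mul p).div_const r).arctan).div_const r
  refine h.congr_deriv ?_
  rw [Real.tan_eq_sin_div_cos]
  have hs := Real.sin_sq_add_cos_sq θ
  have : r ^ 2 * Real.cos θ ^ 2 + p ^ 2 * Real.sin θ ^ 2 = p ^ 2 + B ^ 2 * Real.cos θ ^ 2 := by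
    rw [hr2]; linear_combination p ^ 2 * hs
  have h4 : 0 < p ^ 2 + B ^ 2 * Real.cos θ ^ 2 := by positivity
  have h5 : 1 + (p * (Real.sin θ / Real.cos θ) / r) ^ 2 = (p ^ 2 + B ^ 2 * Real.cos θ ^ 2) / (r ^ 2 * Real.cos θ ^ 2) := by
    rw [← this]; field_simp
  rw [h5]
  field_simp

lemma arct_cont (p B : ℝ) (hp : 0 < p) : Continuous (fun θ => p / (p ^ 2 + B ^ 2 * Real.cos θ ^ 2)) :=
  continuous_const.div (by fun_prop) (fun θ => by positivity)

lemma arct_int (p B : ℝ) (hp : 0 < p) :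
    ∫ θ in (0:ℝ)..(Real.pi / 2), p / (p ^ 2 + B ^ 2 * Real.cos θ ^ 2) =
      (Real.pi / 2) / Real.sqrt (p ^ 2 + B ^ 2) := by
  have hq : 0 < p ^ 2 + B ^ 2 := by positivity
  have hrp : 0 < Real.sqrt (p ^ 2 + B ^ 2) := Real.sqrt_pos.2 hq
  rw [intervalIntegral.integral_eq_sub_of_hasDerivAt_of_tendsto (a := 0) (b := Real.pi / 2) (fa := 0)
    (fb := (Real.pi / 2) / Real.sqrt (p ^ 2 + B ^ 2)) Real.pi_div_two_pos
    (fun θ hθ => arct_deriv p B θ hp (Real.cos_pos_of_mem_Ioo ⟨by linarith [hθ.1, Real.pi_pos], hθ.2⟩).ne')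
    ((arct_cont p B hp).intervalIntegrable _ _)]
  · simp
  · have := (arct_deriv p B 0 hp (by simp)).continuousAt.tendsto
    simp at this
    exact this.mono_left nhdsWithin_le_nhds
  · refine Tendsto.div_const ?_ _
    refine (tendsto_nhds_of_tendsto_nhdsWithin Real.tendsto_arctan_atTop).comp ?_
    exact (Real.tendsto_tan_pi_div_two.const_mul_atTop hp).atTop_div_const hrp

def Dec (d : ℕ → ℂ) : Prop := ∀ R : ℝ, 0 ≤ R → Summable (fun k => ‖d k‖ * R ^ k)

lemma Dec.mul {d : ℕ → ℂ} (hd : Dec d) (μ : ℂ) : Dec (fun k => d k * (μ + 2 * k)) := by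
  intro R hR
  refine Summable.of_nonneg_of_le (fun k => by positivity) (fun k => ?_)
    ((hd (2 * R) (by positivity)).mul_left (‖μ‖ + 2))
  have h1 : ‖μ + 2 * (k:ℂ)‖ ≤ (‖μ‖ + 2) * 2 ^ k := by
    have h2 : ‖μ + 2 * (k:ℂ)‖ ≤ ‖μ‖ + 2 * k := by
      refine (norm_add_le _ _).trans ?_
      simp
    have h3 : (k:ℝ) + 1 ≤ 2 ^ k := by exact_mod_cast Nat.lt_two_pow_self (n := k)
    have h4 : (0:ℝ) ≤ k := by positivity
    have h5 := norm_nonneg μ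
    nlinarith
  rw [norm_mul, mul_pow]
  calc ‖d k‖ * ‖μ + 2 * (k:ℂ)‖ * R ^ k ≤ ‖d k‖ * ((‖μ‖ + 2) * 2 ^ k) * R ^ k := by gcongr
    _ = _ := by ring

lemma ser_norm (d : ℕ → ℂ) (μ : ℂ) (hμ : μ.re = 0) (t : ℝ) (k : ℕ) :
    ‖d k * Complex.exp ((μ + 2 * k) * t)‖ = ‖d k‖ * (Real.exp (2 * t)) ^ k := by
  rw [norm_mul, Complex.norm_exp, ← Real.exp_nat_mul]
  congr 2
  simp [hμ]
  ring

lemma ser_summable {d : ℕ → ℂ} (hd : Dec d) (μ : ℂ) (hμ : μ.re = 0) (t : ℝ) :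
    Summable (fun k : ℕ => d k * Complex.exp ((μ + 2 * k) * t)) := by
  refine Summable.of_norm ?_
  simp_rw [ser_norm d μ hμ]
  exact hd _ (Real.exp_pos _).le

lemma ser_deriv {d : ℕ → ℂ} (hd : Dec d) (μ : ℂ) (hμ : μ.re = 0) (t : ℝ) :
    HasDerivAt (fun t : ℝ => ∑' k : ℕ, d k * Complex.exp ((μ + 2 * k) * t))
      (∑' k : ℕ, (d k * (μ + 2 * k)) * Complex.exp ((μ + 2 * k) * t)) t := by
  refine hasDerivAt_tsum_of_isPreconnected (𝕜 := ℝ) (t := Set.Iio (t + 1)) (y₀ := t)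
    (u := fun k => ‖d k * (μ + 2 * k)‖ * (Real.exp (2 * (t + 1))) ^ k)
    (g := fun (k : ℕ) (t : ℝ) => d k * Complex.exp ((μ + 2 * k) * t))
    (g' := fun (k : ℕ) (t : ℝ) => (d k * (μ + 2 * k)) * Complex.exp ((μ + 2 * k) * t))
    (hd.mul μ _ (Real.exp_pos _).le) isOpen_Iio isPreconnected_Iio ?_ ?_ (by simp)
    (ser_summable hd μ hμ t) (by simp)
  · intro k s _
    have h1 : HasDerivAt (fun s : ℝ => (μ + 2 * k) * (s : ℂ)) (μ + 2 * k) s := by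
      simpa using (Complex.ofRealCLM.hasDerivAt (x := s)).const_mul (μ + 2 * (k:ℂ))
    refine (h1.cexp.const_mul (d k)).congr_deriv ?_
    ring
  · intro k s hs
    rw [ser_norm (fun k => d k * (μ + 2 * k)) μ hμ s k]
    have : s ≤ t + 1 := le_of_lt hs
    gcongr

lemma ser_bound {d : ℕ → ℂ} (hd : Dec d) (μ : ℂ) (hμ : μ.re = 0) :
    ∃ K : ℝ, ∀ t : ℝ, t ≤ 0 → ‖∑' k : ℕ, d k * Complex.exp ((μ + 2 * k) * t)‖ ≤ K := by
  refine ⟨∑' k, ‖d k‖ * 1 ^ k, fun t ht => ?_⟩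
  refine tsum_of_norm_bounded (hd 1 zero_le_one).hasSum (fun k => ?_)
  rw [ser_norm d μ hμ]
  have : Real.exp (2 * t) ≤ 1 := Real.exp_le_one_iff.2 (by linarith)
  gcongr

noncomputable def bco (μ : ℂ) (k : ℕ) : ℂ := (-1) ^ k / ((Nat.factorial k : ℂ) * Complex.Gamma (μ + k + 1))

lemma gam_ne_s16 (μ : ℂ) (hμ : μ.re = 0) (k : ℕ) : Complex.Gamma (μ + k + 1) ≠ 0 := by
  apply Complex.Gamma_ne_zero_of_re_pos
  simp [hμ]
  positivity

lemma gam_succ (μ : ℂ) (hμ : μ.re = 0) (k : ℕ) :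
    Complex.Gamma (μ + (k + 1 : ℕ) + 1) = (μ + k + 1) * Complex.Gamma (μ + k + 1) := by
  rw [← Complex.Gamma_add_one (μ + k + 1)]
  · push_cast; congr 1; ring
  · intro h
    have := congrArg Complex.re h
    simp [hμ] at this
    have : (0:ℝ) ≤ k := by positivity
    linarith

lemma gam_ge (μ : ℂ) (hμ : μ.re = 0) (k : ℕ) : ‖Complex.Gamma (μ + 1)‖ ≤ ‖Complex.Gamma (μ + k + 1)‖ := by
  induction k with
  | zero => simp
  | succ k ih =>
    rw [gam_succ μ hμ, norm_mul]
    have h1 : 1 ≤ ‖μ + k + 1‖ := by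
      have := Complex.abs_re_le_norm (μ + k + 1)
      simp [hμ] at this
      have h2 := le_abs_self ((k:ℝ) + 1)
      have : (0:ℝ) ≤ k := by positivity
      linarith
    nlinarith [norm_nonneg (Complex.Gamma (μ + k + 1))]

lemma bco_dec (μ : ℂ) (hμ : μ.re = 0) : Dec (bco μ) := by
  intro R hR
  have hG : 0 < ‖Complex.Gamma (μ + 1)‖ := by
    have := gam_ne_s16 μ hμ 0
    simpa using this
  refine Summable.of_nonneg_of_le (fun k => by positivity) (fun k => ?_)
    ((Real.summable_pow_div_factorial R).mul_left (1 / ‖Complex.Gamma (μ + 1)‖))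
  have := gam_ge μ hμ k
  rw [bco, norm_div, norm_mul]
  simp only [norm_pow, norm_neg, norm_one, one_pow, Complex.norm_natCast]
  rw [show 1 / ‖Complex.Gamma (μ + 1)‖ * (R ^ k / (Nat.factorial k : ℝ)) =
    1 / ((Nat.factorial k : ℝ) * ‖Complex.Gamma (μ + 1)‖) * R ^ k by field_simp]
  gcongr

noncomputable def y0 (μ : ℂ) (t : ℝ) : ℂ := ∑' k : ℕ, bco μ k * Complex.exp ((μ + 2 * k) * t)
noncomputable def y1 (μ : ℂ) (t : ℝ) : ℂ := ∑' k : ℕ, (bco μ k * (μ + 2 * k)) * Complex.exp ((μ + 2 * k) * t)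

lemma bJ_eq (μ : ℂ) (x : ℝ) : besselJ μ x = y0 μ (Real.log (x / 2)) := by
  unfold besselJ y0 bco
  congr 1; ext k; ring

lemma y0_deriv (μ : ℂ) (hμ : μ.re = 0) (t : ℝ) : HasDerivAt (y0 μ) (y1 μ t) t :=
  ser_deriv (bco_dec μ hμ) μ hμ t

lemma bco_rec (μ : ℂ) (hμ : μ.re = 0) (k : ℕ) :
    bco μ (k + 1) * ((μ + 2 * (k + 1 : ℕ)) * (μ + 2 * (k + 1 : ℕ)) - μ ^ 2) = -4 * bco μ k := by
  have h1 := gam_ne_s16 μ hμ k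
  have h2 := gam_succ μ hμ k
  have h3 : μ + k + 1 ≠ 0 := by
    have := gam_ne_s16 μ hμ (k + 1)
    rw [h2] at this
    exact left_ne_zero_of_mul this
  have h4 : (Nat.factorial k : ℂ) ≠ 0 := by exact_mod_cast Nat.factorial_ne_zero k
  have h5 : (k : ℂ) + 1 ≠ 0 := by exact_mod_cast Nat.succ_ne_zero k
  unfold bco
  rw [h2, Nat.factorial_succ]
  push_cast
  field_simp
  ring

lemma y1_deriv (μ : ℂ) (hμ : μ.re = 0) (t : ℝ) :
    HasDerivAt (y1 μ) ((μ ^ 2 - 4 * Real.exp (2 * t)) * y0 μ t) t := by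
  have hd1 := (bco_dec μ hμ).mul μ
  refine (ser_deriv hd1 μ hμ t).congr_deriv ?_
  have s2 := ser_summable (hd1.mul μ) μ hμ t
  have s0 := ser_summable (bco_dec μ hμ) μ hμ t
  have key : ∑' k : ℕ, (bco μ k * (μ + 2 * k) * (μ + 2 * k) * Complex.exp ((μ + 2 * k) * t)
      - μ ^ 2 * (bco μ k * Complex.exp ((μ + 2 * k) * t))) = -4 * Real.exp (2 * t) * y0 μ t := by
    rw [(s2.sub (s0.mul_left (μ ^ 2))).tsum_eq_zero_add, y0, ← tsum_mul_left]
    have e0 : bco μ 0 * (μ + 2 * (0:ℕ)) * (μ + 2 * (0:ℕ)) * Complex.exp ((μ + 2 * (0:ℕ)) * t)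
      - μ ^ 2 * (bco μ 0 * Complex.exp ((μ + 2 * (0:ℕ)) * t)) = 0 := by
      push_cast; ring
    rw [e0, zero_add]
    congr 1
    ext k
    have e1 : Complex.exp ((μ + 2 * (k + 1 : ℕ)) * t) = Real.exp (2 * t) * Complex.exp ((μ + 2 * k) * t) := by
      rw [Complex.ofReal_exp, ← Complex.exp_add]
      congr 1; push_cast; ring
    rw [e1]
    linear_combination (Real.exp (2 * t) * Complex.exp ((μ + 2 * k) * t)) * bco_rec μ hμ k
  rw [s2.tsum_sub (s0.mul_left (μ ^ 2)), tsum_mul_left] at key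
  rw [y0] at key ⊢
  linear_combination key

lemma y0_near (μ : ℂ) (hμ : μ.re = 0) : ∃ K : ℝ, ∀ t : ℝ, t ≤ 0 →
    ‖y0 μ t - Complex.exp (μ * t) / Complex.Gamma (μ + 1)‖ ≤ K * Real.exp t := by
  have hd : Dec (fun k => bco μ (k + 1)) := by
    intro R hR
    have h := (summable_nat_add_iff 1).2 (bco_dec μ hμ (R + 1) (by positivity))
    refine Summable.of_nonneg_of_le (fun k => by positivity) (fun k => ?_) h
    have : R ^ k ≤ (R + 1) ^ (k + 1) := by
      calc R ^ k ≤ (R + 1) ^ k := by gcongr; linarith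
        _ ≤ (R + 1) ^ (k + 1) := pow_le_pow_right₀ (by linarith) (by omega)
    gcongr
  obtain ⟨K, hK⟩ := ser_bound hd μ hμ
  refine ⟨K, fun t ht => ?_⟩
  have hK0 : 0 ≤ K := (norm_nonneg _).trans (hK t ht)
  have s0 := ser_summable (bco_dec μ hμ) μ hμ t
  have e : y0 μ t - Complex.exp (μ * t) / Complex.Gamma (μ + 1) =
      Real.exp (2 * t) * ∑' k : ℕ, bco μ (k + 1) * Complex.exp ((μ + 2 * k) * t) := by
    rw [y0, s0.tsum_eq_zero_add, ← tsum_mul_left]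
    have e0 : bco μ 0 * Complex.exp ((μ + 2 * (0:ℕ)) * t) = Complex.exp (μ * t) / Complex.Gamma (μ + 1) := by
      simp [bco]; ring
    rw [e0, add_sub_cancel_left]
    congr 1
    ext k
    have e1 : Complex.exp ((μ + 2 * (k + 1 : ℕ)) * t) = Real.exp (2 * t) * Complex.exp ((μ + 2 * k) * t) := by
      rw [Complex.ofReal_exp, ← Complex.exp_add]
      congr 1; push_cast; ring
    rw [e1]; ring
  rw [e, norm_mul, Complex.norm_real, Real.norm_eq_abs, abs_of_pos (Real.exp_pos _), mul_comm]
  have h1 : Real.exp (2 * t) ≤ Real.exp t := Real.exp_le_exp.2 (by linarith)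
  exact mul_le_mul (hK t ht) h1 (Real.exp_pos _).le hK0

lemma y_energy (μ : ℂ) (hμ : μ.re = 0) :
    Antitone (fun t => ‖y0 μ t‖ ^ 2 + ‖y1 μ t‖ ^ 2 / (μ.im ^ 2 + 4 * Real.exp (2 * t))) := by
  have hpos : ∀ t : ℝ, 0 < μ.im ^ 2 + 4 * Real.exp (2 * t) := fun t => by positivity
  have hq : ∀ t : ℝ, HasDerivAt (fun t => μ.im ^ 2 + 4 * Real.exp (2 * t)) (8 * Real.exp (2 * t)) t := by
    intro t
    have := ((((hasDerivAt_id t).const_mul 2).exp).const_mul 4).const_add (μ.im ^ 2)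
    refine this.congr_deriv ?_
    simp; ring
  have hD : ∀ t, HasDerivAt (fun t => ‖y0 μ t‖ ^ 2 + ‖y1 μ t‖ ^ 2 / (μ.im ^ 2 + 4 * Real.exp (2 * t)))
      (-(8 * Real.exp (2 * t) * ‖y1 μ t‖ ^ 2 / (μ.im ^ 2 + 4 * Real.exp (2 * t)) ^ 2)) t := by
    intro t
    have h := ((y0_deriv μ hμ t).norm_sq).add (((y1_deriv μ hμ t).norm_sq).div (hq t) (hpos t).ne')
    refine h.congr_deriv ?_
    have hp := hpos t
    have e1 : inner ℝ (y1 μ t) ((μ ^ 2 - 4 * Real.exp (2 * t)) * y0 μ t) =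
      -(μ.im ^ 2 + 4 * Real.exp (2 * t)) * inner ℝ (y0 μ t) (y1 μ t) := by
      have e2 : (μ ^ 2 - 4 * Real.exp (2 * t)) = ((-(μ.im ^ 2 + 4 * Real.exp (2 * t)) : ℝ) : ℂ) := by
        apply Complex.ext
        · simp [pow_two, hμ, -Complex.ofReal_exp]; ring
        · simp [pow_two, hμ, -Complex.ofReal_exp]
      rw [e2, ← Complex.real_smul, inner_smul_right, real_inner_comm]
    rw [e1]
    field_simp
    ring
  refine antitone_of_deriv_nonpos (fun t => (hD t).differentiableAt) (fun t => ?_)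
  rw [(hD t).deriv, neg_nonpos]
  have := hpos t
  positivity

lemma y_bound (μ : ℂ) (hμ : μ.re = 0) : ∃ K : ℝ, 0 < K ∧ ∀ t : ℝ, ‖y0 μ t‖ ≤ K ∧
    ‖y1 μ t‖ ≤ K * (1 + Real.exp t) := by
  obtain ⟨K0, h0⟩ := ser_bound (bco_dec μ hμ) μ hμ
  obtain ⟨K1, h1⟩ := ser_bound ((bco_dec μ hμ).mul μ) μ hμ
  set W := ‖y0 μ 0‖ ^ 2 + ‖y1 μ 0‖ ^ 2 / (μ.im ^ 2 + 4 * Real.exp (2 * 0)) with hW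
  have hW0 : 0 ≤ W := by positivity
  set a := |μ.im| + 2 with ha
  have ha2 : 2 ≤ a := by rw [ha]; linarith [abs_nonneg μ.im]
  have hsq := Real.sqrt_nonneg W
  refine ⟨|K0| + |K1| + Real.sqrt W * a + 1, by positivity, fun t => ?_⟩
  have hK0 := le_abs_self K0
  have hK1 := le_abs_self K1
  have hK0' := abs_nonneg K0
  have hK1' := abs_nonneg K1
  have het := Real.exp_pos t
  rcases le_total t 0 with ht | ht
  · have a0 : ‖y0 μ t‖ ≤ K0 := h0 t ht
    have a1 : ‖y1 μ t‖ ≤ K1 := h1 t ht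
    have : 0 ≤ Real.sqrt W * a := by positivity
    constructor
    · linarith
    · nlinarith
  · have hE := y_energy μ hμ ht
    simp only [← hW] at hE
    have hp : 0 < μ.im ^ 2 + 4 * Real.exp (2 * t) := by positivity
    have b0 : ‖y0 μ t‖ ^ 2 ≤ W := by
      have : 0 ≤ ‖y1 μ t‖ ^ 2 / (μ.im ^ 2 + 4 * Real.exp (2 * t)) := by positivity
      linarith
    have b1 : ‖y1 μ t‖ ^ 2 ≤ W * (μ.im ^ 2 + 4 * Real.exp (2 * t)) := by
      rw [← div_le_iff₀ hp]
      have : 0 ≤ ‖y0 μ t‖ ^ 2 := by positivity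
      linarith
    have c0 : ‖y0 μ t‖ ≤ Real.sqrt W := Real.le_sqrt_of_sq_le b0
    have c1 : ‖y1 μ t‖ ≤ Real.sqrt W * (a * (1 + Real.exp t)) := by
      refine (sq_le_sq₀ (norm_nonneg _) (by positivity)).1 ?_
      rw [mul_pow, Real.sq_sqrt hW0]
      refine b1.trans (mul_le_mul_of_nonneg_left ?_ hW0)
      have : Real.exp (2 * t) = Real.exp t ^ 2 := by rw [← Real.exp_nat_mul]; norm_num
      rw [this, mul_pow, ha]
      have h3 : μ.im ^ 2 = |μ.im| ^ 2 := (sq_abs _).symm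
      rw [h3]
      have h4 := abs_nonneg μ.im
      have : 0 ≤ |μ.im| * Real.exp t := by positivity
      have : 0 ≤ |μ.im| ^ 2 * Real.exp t := by positivity
      nlinarith [sq_nonneg (Real.exp t), sq_nonneg (|μ.im|), mul_nonneg (sq_nonneg (|μ.im|)) (sq_nonneg (Real.exp t)), mul_nonneg h4 (sq_nonneg (Real.exp t))]
    constructor
    · nlinarith
    · nlinarith

lemma bJ_bound (μ : ℂ) (hμ : μ.re = 0) : ∃ K : ℝ, 0 < K ∧ ∀ x : ℝ, ‖besselJ μ x‖ ≤ K := by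
  obtain ⟨K, hK, h⟩ := y_bound μ hμ
  exact ⟨K, hK, fun x => by rw [bJ_eq]; exact (h _).1⟩

lemma log_half_deriv {x : ℝ} (hx : 0 < x) : HasDerivAt (fun x : ℝ => Real.log (x / 2)) (1 / x) x := by
  have h := ((hasDerivAt_id x).div_const 2).log (by simp; positivity)
  refine h.congr_deriv ?_
  simp
  field_simp

lemma bJ_deriv (μ : ℂ) (hμ : μ.re = 0) {x : ℝ} (hx : 0 < x) :
    HasDerivAt (besselJ μ) (y1 μ (Real.log (x / 2)) / x) x := by
  have h := (y0_deriv μ hμ (Real.log (x / 2))).scomp x (log_half_deriv hx)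
  have e : besselJ μ = y0 μ ∘ fun x : ℝ => Real.log (x / 2) := by ext x; exact bJ_eq μ x
  rw [e]
  refine h.congr_deriv ?_
  rw [Complex.real_smul]; push_cast; ring

lemma bD_deriv (μ : ℂ) (hμ : μ.re = 0) {x : ℝ} (hx : 0 < x) :
    HasDerivAt (fun x : ℝ => y1 μ (Real.log (x / 2))) ((μ ^ 2 - x ^ 2) * besselJ μ x / x) x := by
  have h := (y1_deriv μ hμ (Real.log (x / 2))).scomp x (log_half_deriv hx)
  refine h.congr_deriv ?_
  have e : (4:ℂ) * Real.exp (2 * Real.log (x / 2)) = (x:ℂ) ^ 2 := by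
    rw [mul_comm 2, Real.exp_mul, Real.exp_log (by positivity)]
    norm_num
    ring
  rw [Complex.real_smul, e, bJ_eq]; push_cast; ring

lemma bJ_cont (μ : ℂ) (hμ : μ.re = 0) : ContinuousOn (besselJ μ) (Set.Ioi 0) :=
  fun _ hx => (bJ_deriv μ hμ hx).continuousAt.continuousWithinAt

lemma pe_int (k : ℕ) {p : ℝ} (hp : 0 < p) :
    IntegrableOn (fun x : ℝ => x ^ k * Real.exp (-p * x)) (Set.Ioi 0) := by
  have := integrableOn_rpow_mul_exp_neg_mul_rpow (s := k) (p := 1) (b := p)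
    (by have : (0:ℝ) ≤ k := by positivity
        linarith) one_pos hp
  simpa using this

lemma pJ_int (k : ℕ) (μ : ℂ) (hμ : μ.re = 0) {p : ℝ} (hp : 0 < p) :
    IntegrableOn (fun x : ℝ => ((x ^ k * Real.exp (-p * x) : ℝ) : ℂ) * besselJ μ x) (Set.Ioi 0) := by
  obtain ⟨K, hK, h⟩ := bJ_bound μ hμ
  refine Integrable.mul_bdd (c := K) (pe_int k hp).ofReal
    ((bJ_cont μ hμ).aestronglyMeasurable measurableSet_Ioi) (Eventually.of_forall h)

noncomputable def lap (k : ℕ) (μ : ℂ) (p : ℝ) : ℂ :=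
  ∫ x in Set.Ioi (0:ℝ), ((x ^ k * Real.exp (-p * x) : ℝ) : ℂ) * besselJ μ x

lemma lap_deriv (k : ℕ) (μ : ℂ) (hμ : μ.re = 0) {p : ℝ} (hp : 0 < p) :
    HasDerivAt (lap k μ) (-lap (k + 1) μ p) p := by
  obtain ⟨K, hK, h⟩ := bJ_bound μ hμ
  have := (hasDerivAt_integral_of_dominated_loc_of_deriv_le (𝕜 := ℝ)
    (μ := volume.restrict (Set.Ioi (0:ℝ))) (x₀ := p) (s := Set.Ioi (p / 2))
    (F := fun p x => ((x ^ k * Real.exp (-p * x) : ℝ) : ℂ) * besselJ μ x)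
    (F' := fun p x => -(((x ^ (k + 1) * Real.exp (-p * x) : ℝ) : ℂ) * besselJ μ x))
    (bound := fun x => x ^ (k + 1) * Real.exp (-(p / 2) * x) * K)
    (Ioi_mem_nhds (by linarith)) ?_ (pJ_int k μ hμ hp) ?_ ?_
    ((pe_int (k + 1) (by positivity : 0 < p / 2)).mul_const K) ?_).2
  · refine this.congr_deriv ?_
    rw [integral_neg]; rfl
  · filter_upwards [Ioi_mem_nhds hp] with q hq
    exact (pJ_int k μ hμ hq).1
  · exact (pJ_int (k + 1) μ hμ hp).neg.1
  · filter_upwards [ae_restrict_mem measurableSet_Ioi] with x hx q hq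
    have hx' : 0 < x := hx
    have hq' : p / 2 < q := hq
    rw [norm_neg, norm_mul, Complex.norm_real, Real.norm_eq_abs, abs_of_nonneg (by positivity)]
    have := h x
    gcongr
  · filter_upwards with x q hq
    have h1 : HasDerivAt (fun q : ℝ => x ^ k * Real.exp (-q * x)) (-(x ^ (k + 1) * Real.exp (-q * x))) q := by
      have := (((hasDerivAt_id q).neg.mul_const x).exp).const_mul (x ^ k)
      refine this.congr_deriv ?_
      simp; ring
    refine (h1.ofReal_comp.mul_const (besselJ μ x)).congr_deriv ?_
    push_cast; ring

lemma lap_ode (μ : ℂ) (hμ : μ.re = 0) {p : ℝ} (hp : 0 < p) :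
    (1 + p ^ 2) * lap 2 μ p - 3 * p * lap 1 μ p + (1 - μ ^ 2) * lap 0 μ p = 0 := by
  obtain ⟨K, hK, h⟩ := y_bound μ hμ
  set B : ℝ → ℂ := fun x => (Real.exp (-p * x) : ℂ) * ((x - p * x ^ 2) * besselJ μ x - x * y1 μ (Real.log (x / 2))) with hB
  have i0 := pJ_int 0 μ hμ hp
  have i1 := pJ_int 1 μ hμ hp
  have i2 := pJ_int 2 μ hμ hp
  have iall := ((i2.const_mul (1 + (p:ℂ) ^ 2)).sub (i1.const_mul (3 * (p:ℂ)))).add (i0.const_mul (1 - μ ^ 2))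
  have hd : ∀ x ∈ Set.Ioi (0:ℝ), HasDerivAt B
      ((1 + (p:ℂ) ^ 2) * (((x ^ 2 * Real.exp (-p * x) : ℝ) : ℂ) * besselJ μ x)
      - (3 * (p:ℂ)) * (((x ^ 1 * Real.exp (-p * x) : ℝ) : ℂ) * besselJ μ x)
      + (1 - μ ^ 2) * (((x ^ 0 * Real.exp (-p * x) : ℝ) : ℂ) * besselJ μ x)) x := by
    intro x hx
    have hx' : 0 < x := hx
    have h1 : HasDerivAt (fun x : ℝ => Real.exp (-p * x)) (-p * Real.exp (-p * x)) x := by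
      have := (((hasDerivAt_id x).const_mul (-p)).exp)
      refine this.congr_deriv ?_
      simp; ring
    have h2 : HasDerivAt (fun x : ℝ => (x:ℂ)) 1 x := Complex.ofRealCLM.hasDerivAt
    have h3 : HasDerivAt (fun x : ℝ => ((x:ℂ) - p * x ^ 2)) (1 - p * (2 * x)) x := by
      refine (h2.sub ((h2.pow 2).const_mul (p:ℂ))).congr_deriv ?_
      simp
    have := h1.ofReal_comp.mul ((h3.mul (bJ_deriv μ hμ hx')).sub (h2.mul (bD_deriv μ hμ hx')))
    refine this.congr_deriv ?_
    have : (x:ℂ) ≠ 0 := by exact_mod_cast hx'.ne'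
    push_cast
    simp only [Pi.mul_apply, Pi.sub_apply]
    field_simp
    ring
  have hnb : ∀ x : ℝ, 0 < x → ‖B x‖ ≤ K * (Real.exp (-p * x) * (2 * x + (p + 1) * x ^ 2)) := by
    intro x hx
    obtain ⟨ha, hb⟩ := h (Real.log (x / 2))
    rw [← bJ_eq] at ha
    rw [Real.exp_log (by positivity)] at hb
    rw [hB]
    simp only
    rw [norm_mul, Complex.norm_real, Real.norm_eq_abs, abs_of_pos (Real.exp_pos _)]
    have n1 : ‖(x:ℂ) - p * x ^ 2‖ ≤ x + p * x ^ 2 := by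
      refine (norm_sub_le _ _).trans ?_
      simp [abs_of_pos hx, abs_of_pos hp]
    have n2 : ‖((x:ℂ) - p * x ^ 2) * besselJ μ x - x * y1 μ (Real.log (x / 2))‖ ≤ (x + p * x ^ 2) * K + x * (K * (1 + x / 2)) := by
      refine (norm_sub_le _ _).trans ?_
      rw [norm_mul, norm_mul, Complex.norm_real, Real.norm_eq_abs, abs_of_pos hx]
      gcongr
    have n3 : (x + p * x ^ 2) * K + x * (K * (1 + x / 2)) ≤ K * (2 * x + (p + 1) * x ^ 2) := by
      nlinarith [mul_pos hK (mul_pos hx hx)]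
    calc _ ≤ Real.exp (-p * x) * (K * (2 * x + (p + 1) * x ^ 2)) := by gcongr; exact n2.trans n3
      _ = _ := by ring
  have h0 : Tendsto B (𝓝[>] 0) (𝓝 0) := by
    rw [tendsto_zero_iff_norm_tendsto_zero]
    refine squeeze_zero' (Eventually.of_forall fun _ => norm_nonneg _)
      (eventually_nhdsWithin_of_forall fun x hx => hnb x hx) ?_
    refine tendsto_nhdsWithin_of_tendsto_nhds ?_
    have : Continuous (fun x : ℝ => K * (Real.exp (-p * x) * (2 * x + (p + 1) * x ^ 2))) := by fun_prop
    simpa using this.tendsto 0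
  have hi : Tendsto B atTop (𝓝 0) := by
    rw [tendsto_zero_iff_norm_tendsto_zero]
    refine squeeze_zero' (Eventually.of_forall fun _ => norm_nonneg _)
      ((eventually_gt_atTop 0).mono fun x hx => hnb x hx) ?_
    have t1 := tendsto_rpow_mul_exp_neg_mul_atTop_nhds_zero 1 p hp
    have t2 := tendsto_rpow_mul_exp_neg_mul_atTop_nhds_zero 2 p hp
    have := ((t1.const_mul 2).add (t2.const_mul (p + 1))).const_mul K
    simp only [mul_zero, add_zero] at this
    refine this.congr (fun x => ?_)
    rw [Real.rpow_one, Real.rpow_two]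
    ring
  have hB0 : B 0 = 0 := by simp [hB]
  have := integral_Ioi_of_hasDerivAt_of_tendsto (a := 0) (f := B) (m := 0) ?_ hd iall hi
  · rw [hB0, sub_zero, integral_add (by exact (i2.const_mul _).sub (i1.const_mul _)) (i0.const_mul _),
      integral_sub (i2.const_mul _) (i1.const_mul _), integral_const_mul, integral_const_mul,
      integral_const_mul] at this
    exact this
  · rw [← continuousWithinAt_Ioi_iff_Ici, ContinuousWithinAt, hB0]
    exact h0

lemma lapH (μ : ℂ) (hμ : μ.re = 0) : ∃ α β : ℂ, ∀ ξ : ℝ, 0 < ξ →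
    2 * μ * (Real.cosh ξ * lap 0 μ (Real.sinh ξ)) =
      α * Complex.exp (μ * ξ) + β * Complex.exp (-μ * ξ) := by
  set H : ℝ → ℂ := fun ξ => Real.cosh ξ * lap 0 μ (Real.sinh ξ) with hH
  set G : ℝ → ℂ := fun ξ => Real.sinh ξ * lap 0 μ (Real.sinh ξ) - Real.cosh ξ ^ 2 * lap 1 μ (Real.sinh ξ) with hG
  have hl : ∀ k, ∀ ξ : ℝ, 0 < ξ → HasDerivAt (fun ξ => lap k μ (Real.sinh ξ)) (-(Real.cosh ξ * lap (k + 1) μ (Real.sinh ξ))) ξ := by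
    intro k ξ hξ
    refine ((lap_deriv k μ hμ (Real.sinh_pos_iff.2 hξ)).scomp ξ (Real.hasDerivAt_sinh ξ)).congr_deriv ?_
    rw [Complex.real_smul]; ring
  have dH : ∀ ξ : ℝ, 0 < ξ → HasDerivAt H (G ξ) ξ := by
    intro ξ hξ
    refine ((Real.hasDerivAt_cosh ξ).ofReal_comp.mul (hl 0 ξ hξ)).congr_deriv ?_
    simp only [hG]; ring
  have dG : ∀ ξ : ℝ, 0 < ξ → HasDerivAt G (μ ^ 2 * H ξ) ξ := by
    intro ξ hξ
    refine (((Real.hasDerivAt_sinh ξ).ofReal_comp.mul (hl 0 ξ hξ)).sub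
      (((Real.hasDerivAt_cosh ξ).ofReal_comp.pow 2).mul (hl 1 ξ hξ))).congr_deriv ?_
    have := lap_ode μ hμ (Real.sinh_pos_iff.2 hξ)
    have e : (1 + (Real.sinh ξ : ℂ) ^ 2) = (Real.cosh ξ : ℂ) ^ 2 := by
      rw [← Complex.ofReal_pow, ← Complex.ofReal_pow, Real.cosh_sq]; push_cast; ring
    rw [e] at this
    simp only [hH]
    simp [-Complex.ofReal_cosh, -Complex.ofReal_sinh]
    linear_combination (Real.cosh ξ : ℂ) * this
  have hc : ∀ (a : ℂ) (P : ℝ → ℂ), (∀ ξ : ℝ, 0 < ξ → HasDerivAt P (a * P ξ) ξ) →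
      ∃ γ : ℂ, ∀ ξ : ℝ, 0 < ξ → P ξ = γ * Complex.exp (a * ξ) := by
    intro a P hP
    have he : ∀ ξ : ℝ, HasDerivAt (fun ξ : ℝ => Complex.exp (-a * ξ)) (-a * Complex.exp (-a * ξ)) ξ := by
      intro ξ
      have h1 : HasDerivAt (fun s : ℝ => -a * (s : ℂ)) (-a) ξ := by
        simpa using (Complex.ofRealCLM.hasDerivAt (x := ξ)).const_mul (-a)
      refine h1.cexp.congr_deriv ?_
      ring
    have hd : ∀ ξ : ℝ, 0 < ξ → HasDerivAt (fun ξ : ℝ => P ξ * Complex.exp (-a * ξ)) 0 ξ := by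
      intro ξ hξ
      refine ((hP ξ hξ).mul (he ξ)).congr_deriv ?_
      ring
    refine ⟨P 1 * Complex.exp (-a * (1:ℝ)), fun ξ hξ => ?_⟩
    have h2 : P ξ * Complex.exp (-a * ξ) = P 1 * Complex.exp (-a * (1:ℝ)) :=
      isOpen_Ioi.is_const_of_deriv_eq_zero (s := Set.Ioi (0:ℝ)) (f := fun ξ : ℝ => P ξ * Complex.exp (-a * ξ)) isPreconnected_Ioi
      (fun ξ hξ => (hd ξ hξ).differentiableAt.differentiableWithinAt) (fun ξ hξ => (hd ξ hξ).deriv)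
      (Set.mem_Ioi.2 hξ) (Set.mem_Ioi.2 one_pos)
    rw [← h2, mul_assoc, ← Complex.exp_add]
    simp
  obtain ⟨α, hα⟩ := hc μ (fun ξ => G ξ + μ * H ξ) (fun ξ hξ => by
    refine ((dG ξ hξ).add ((dH ξ hξ).const_mul μ)).congr_deriv ?_
    ring)
  obtain ⟨β, hβ⟩ := hc (-μ) (fun ξ => G ξ - μ * H ξ) (fun ξ hξ => by
    refine ((dG ξ hξ).sub ((dH ξ hξ).const_mul μ)).congr_deriv ?_
    ring)
  refine ⟨α, -β, fun ξ hξ => ?_⟩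
  have h1 := hα ξ hξ
  have h2 := hβ ξ hξ
  change 2 * μ * H ξ = _
  linear_combination h1 - h2

lemma bJ_near (μ : ℂ) (hμ : μ.re = 0) : ∃ K : ℝ, 0 ≤ K ∧ ∀ x : ℝ, 0 < x →
    ‖besselJ μ x - Complex.exp (μ * Real.log (x / 2)) / Complex.Gamma (μ + 1)‖ ≤ K * x := by
  obtain ⟨K0, h0⟩ := y0_near μ hμ
  obtain ⟨K1, hK1, h1⟩ := bJ_bound μ hμ
  set g := 1 / ‖Complex.Gamma (μ + 1)‖ with hg
  have hg0 : 0 ≤ g := by positivity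
  refine ⟨|K0| + K1 + g, by positivity, fun x hx => ?_⟩
  have hk := le_abs_self K0
  have hk' := abs_nonneg K0
  rcases le_total (x / 2) 1 with h | h
  · rw [bJ_eq]
    refine (h0 _ (Real.log_nonpos (by positivity) h)).trans ?_
    rw [Real.exp_log (by positivity)]
    nlinarith
  · have e : ‖Complex.exp (μ * Real.log (x / 2)) / Complex.Gamma (μ + 1)‖ = g := by
      rw [norm_div, Complex.norm_exp, hg]
      simp [hμ]
    refine (norm_sub_le _ _).trans ?_
    rw [e]
    have := h1 x
    nlinarith

lemma lap_asym (μ : ℂ) (hμ : μ.re = 0) : ∃ K : ℝ, 0 ≤ K ∧ ∀ p : ℝ, 0 < p →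
    ‖lap 0 μ p - Complex.exp (-μ * Real.log (2 * p)) / p‖ ≤ K / p ^ 2 := by
  obtain ⟨K, hK, h⟩ := bJ_near μ hμ
  refine ⟨K, hK, fun p hp => ?_⟩
  have hG : Complex.Gamma (μ + 1) ≠ 0 := by simpa using gam_ne_s16 μ hμ 0
  have e1 : ∫ x in Set.Ioi (0:ℝ), (Real.exp (-p * x) : ℂ) * (Complex.exp (μ * Real.log (x / 2)) / Complex.Gamma (μ + 1))
      = Complex.exp (-μ * Real.log (2 * p)) / p := by
    have h1 := Complex.integral_cpow_mul_exp_neg_mul_Ioi (a := μ + 1) (r := p) (by simp [hμ]) (by simpa using hp)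
    have h2 : ∀ x ∈ Set.Ioi (0:ℝ), (Real.exp (-p * x) : ℂ) * (Complex.exp (μ * Real.log (x / 2)) / Complex.Gamma (μ + 1))
      = (Complex.exp (-μ * Real.log 2) / Complex.Gamma (μ + 1)) * ((x:ℂ) ^ (μ + 1 - 1) * Complex.exp (-(p * x))) := by
      intro x hx
      have hx' : 0 < x := hx
      rw [add_sub_cancel_right, Complex.cpow_def_of_ne_zero (by exact_mod_cast hx'.ne'), ← Complex.ofReal_log hx'.le,
        Real.log_div hx'.ne' two_ne_zero]
      push_cast
      rw [← neg_mul, show μ * ((Real.log x : ℂ) - Real.log 2) = -μ * Real.log 2 + Real.log x * μ by ring, Complex.exp_add]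
      ring
    rw [setIntegral_congr_fun measurableSet_Ioi h2, integral_const_mul, h1, one_div,
      Complex.cpow_add _ _ (by simpa using hp.ne'), Complex.cpow_one, Complex.cpow_def_of_ne_zero (by simpa using hp.ne'),
      ← Complex.ofReal_inv, ← Complex.ofReal_log (by positivity), Real.log_inv, Real.log_mul two_ne_zero hp.ne']
    push_cast
    rw [show -μ * ((Real.log 2 : ℂ) + Real.log p) = -μ * Real.log 2 + -Real.log p * μ by ring, Complex.exp_add]
    field_simp
  have i1 : IntegrableOn (fun x : ℝ => (Real.exp (-p * x) : ℂ) * (Complex.exp (μ * Real.log (x / 2)) / Complex.Gamma (μ + 1))) (Set.Ioi 0) := by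
    have h3 := (pe_int 0 hp).ofReal (𝕜 := ℂ)
    simp only [pow_zero, one_mul] at h3
    refine Integrable.mul_bdd (c := 1 / ‖Complex.Gamma (μ + 1)‖) h3 ?_ (Eventually.of_forall fun x => ?_)
    · refine ContinuousOn.aestronglyMeasurable (fun x hx => ContinuousAt.continuousWithinAt ?_) measurableSet_Ioi
      have := (log_half_deriv hx).continuousAt
      fun_prop
    · rw [norm_div, Complex.norm_exp]
      simp [hμ]
  have i0 := pJ_int 0 μ hμ hp
  rw [← e1, lap, ← integral_sub i0 i1]
  have e2 : ∫ x in Set.Ioi (0:ℝ), K * (x ^ 1 * Real.exp (-p * x)) = K / p ^ 2 := by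
    rw [integral_const_mul]
    have := Real.integral_rpow_mul_exp_neg_mul_Ioi (a := 2) (r := p) two_pos hp
    norm_num at this
    simp only [pow_one, neg_mul]
    rw [this]; ring
  rw [← e2]
  refine norm_integral_le_of_norm_le ((pe_int 1 hp).const_mul K) ?_
  filter_upwards [ae_restrict_mem measurableSet_Ioi] with x hx
  have := h x hx
  rw [pow_zero, one_mul, ← mul_sub, norm_mul, Complex.norm_real, Real.norm_eq_abs, abs_of_pos (Real.exp_pos _), pow_one]
  calc _ ≤ Real.exp (-p * x) * (K * x) := by gcongr
    _ = _ := by ring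

lemma lap_formula (τ : ℝ) (hτ : 0 < τ) (ξ : ℝ) (hξ : 0 < ξ) :
    Real.cosh ξ * lap 0 (Complex.I * τ) (Real.sinh ξ) = Complex.exp (-(Complex.I * τ) * ξ) := by
  set μ : ℂ := Complex.I * τ with hμd
  have hμ : μ.re = 0 := by simp [hμd]
  have hμ0 : μ ≠ 0 := by
    rw [hμd]; exact mul_ne_zero Complex.I_ne_zero (by exact_mod_cast hτ.ne')
  have hn : ∀ (a : ℝ), ‖Complex.exp (μ * a)‖ = 1 := by
    intro a; rw [Complex.norm_exp]; simp [hμ]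
  have hn' : ∀ (a : ℝ), ‖Complex.exp (-μ * a)‖ = 1 := by
    intro a; rw [Complex.norm_exp]; simp [hμ]
  obtain ⟨α, β, hab⟩ := lapH μ hμ
  obtain ⟨K, hK, has⟩ := lap_asym μ hμ
  have hs : Tendsto Real.sinh atTop atTop := tendsto_sinh_top
  -- ratio
  have t0 : Tendsto (fun ξ : ℝ => Real.exp (-ξ)) atTop (𝓝 0) := Real.tendsto_exp_neg_atTop_nhds_zero
  have tinv : Tendsto (fun ξ : ℝ => (Real.sinh ξ)⁻¹) atTop (𝓝 0) := tendsto_inv_atTop_zero.comp hs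
  have trat : Tendsto (fun ξ : ℝ => Real.cosh ξ / Real.sinh ξ) atTop (𝓝 1) := by
    have : Tendsto (fun ξ : ℝ => 1 + Real.exp (-ξ) * (Real.sinh ξ)⁻¹) atTop (𝓝 (1 + 0 * 0)) :=
      (t0.mul tinv).const_add 1
    rw [mul_zero, add_zero] at this
    refine this.congr' ?_
    filter_upwards [eventually_gt_atTop 0] with ξ h
    have := Real.sinh_pos_iff.2 h
    rw [← Real.cosh_sub_sinh]
    field_simp
    ring
  have tlog : Tendsto (fun ξ : ℝ => Real.log (2 * Real.sinh ξ) - ξ) atTop (𝓝 0) := by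
    have : Tendsto (fun ξ : ℝ => Real.log (1 - Real.exp (-ξ) * Real.exp (-ξ))) atTop (𝓝 (Real.log (1 - 0 * 0))) := by
      refine ((t0.mul t0).const_sub 1).log (by norm_num)
    simp only [mul_zero, sub_zero, Real.log_one] at this
    refine this.congr' ?_
    filter_upwards [eventually_gt_atTop 0] with ξ h
    have h1 : 2 * Real.sinh ξ = Real.exp ξ * (1 - Real.exp (-ξ) * Real.exp (-ξ)) := by
      rw [Real.sinh_eq, mul_sub, ← mul_assoc, ← Real.exp_add]; simp; ring
    have h2 : Real.exp (-ξ) < 1 := by rw [← Real.exp_zero]; exact Real.exp_lt_exp.2 (by linarith)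
    have h3 := Real.exp_pos (-ξ)
    rw [h1, Real.log_mul (Real.exp_pos _).ne' (by nlinarith), Real.log_exp]
    ring
  have tmain : Tendsto (fun ξ : ℝ => Complex.exp (μ * ξ) * (Real.cosh ξ * lap 0 μ (Real.sinh ξ)) - 1) atTop (𝓝 0) := by
    have a1 : Tendsto (fun ξ : ℝ => Complex.exp (μ * ξ) * Real.cosh ξ * (lap 0 μ (Real.sinh ξ) - Complex.exp (-μ * Real.log (2 * Real.sinh ξ)) / Real.sinh ξ)) atTop (𝓝 0) := by
      rw [tendsto_zero_iff_norm_tendsto_zero]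
      have : Tendsto (fun ξ : ℝ => K * (Real.cosh ξ / Real.sinh ξ) * (Real.sinh ξ)⁻¹) atTop (𝓝 (K * 1 * 0)) :=
        (trat.const_mul K).mul tinv
      rw [mul_zero] at this
      refine squeeze_zero' (Eventually.of_forall fun _ => norm_nonneg _) ?_ this
      filter_upwards [eventually_gt_atTop 0] with ξ h
      have hsh := Real.sinh_pos_iff.2 h
      rw [norm_mul, norm_mul, hn, Complex.norm_real, Real.norm_eq_abs, abs_of_pos (Real.cosh_pos _), one_mul]
      calc _ ≤ Real.cosh ξ * (K / Real.sinh ξ ^ 2) := by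
            have := has _ hsh
            have := Real.cosh_pos ξ
            gcongr
        _ = _ := by field_simp
    have a2 : Tendsto (fun ξ : ℝ => ((Real.cosh ξ / Real.sinh ξ : ℝ) : ℂ) * Complex.exp (-μ * ((Real.log (2 * Real.sinh ξ) - ξ : ℝ) : ℂ)) - 1) atTop (𝓝 0) := by
      have b1 := (Complex.continuous_ofReal.tendsto 1).comp trat
      have b2 := (Complex.continuous_ofReal.tendsto 0).comp tlog
      have b3 := (Complex.continuous_exp.tendsto _).comp (b2.const_mul (-μ))
      have := (b1.mul b3).sub_const 1
      simpa [Function.comp_def] using this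
    have := a1.add a2
    rw [add_zero] at this
    refine this.congr (fun ξ => ?_)
    have e : Complex.exp (-μ * ((Real.log (2 * Real.sinh ξ) - ξ : ℝ) : ℂ)) = Complex.exp (μ * ξ) * Complex.exp (-μ * Real.log (2 * Real.sinh ξ)) := by
      rw [← Complex.exp_add]; congr 1; push_cast; ring
    rw [e, Complex.ofReal_div]
    ring
  have tab : Tendsto (fun ξ : ℝ => α * Complex.exp (2 * μ * ξ) + β - 2 * μ) atTop (𝓝 0) := by
    have := tmain.const_mul (2 * μ)
    rw [mul_zero] at this
    refine this.congr' ?_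
    filter_upwards [eventually_gt_atTop 0] with ξ h
    have h1 := hab ξ h
    have e1 : Complex.exp (2 * μ * ξ) = Complex.exp (μ * ξ) * Complex.exp (μ * ξ) := by
      rw [← Complex.exp_add]; congr 1; ring
    have e2 : Complex.exp (μ * ξ) * Complex.exp (-μ * ξ) = 1 := by
      rw [← Complex.exp_add]; simp
    rw [e1]
    linear_combination Complex.exp (μ * ξ) * h1 + β * e2
  have hseq : ∀ a : ℝ, Tendsto (fun k : ℕ => (k:ℝ) * (Real.pi / τ) + a) atTop atTop := fun a =>
    tendsto_atTop_add_const_right _ _ (tendsto_natCast_atTop_atTop.atTop_mul_const (by positivity))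
  have hval : ∀ (a : ℝ), α * Complex.exp (2 * μ * a) + β - 2 * μ = 0 := by
    intro a
    have := tab.comp (hseq a)
    refine tendsto_nhds_unique (tendsto_const_nhds.congr fun k => ?_) this
    simp only [Function.comp_def]
    have e : Complex.exp (2 * μ * (((k:ℝ) * (Real.pi / τ) + a : ℝ) : ℂ)) = Complex.exp (2 * μ * a) := by
      rw [Complex.exp_eq_exp_iff_exists_int]
      refine ⟨k, ?_⟩
      have : (τ:ℂ) ≠ 0 := by exact_mod_cast hτ.ne'
      rw [hμd]
      push_cast
      field_simp
      ring
    rw [e]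
  have v1 := hval 0
  have v2 := hval (Real.pi / (2 * τ))
  have e2 : Complex.exp (2 * μ * ((Real.pi / (2 * τ) : ℝ) : ℂ)) = -1 := by
    rw [← Complex.exp_pi_mul_I]
    congr 1
    have : (τ:ℂ) ≠ 0 := by exact_mod_cast hτ.ne'
    rw [hμd]
    push_cast
    field_simp
  rw [e2] at v2
  simp at v1
  have hα : α = 0 := by linear_combination (v1 - v2) / 2
  have hβ : β = 2 * μ := by linear_combination v1 - hα
  have := hab ξ hξ
  rw [hα, hβ, zero_mul, zero_add] at this
  exact mul_left_cancel₀ (mul_ne_zero two_ne_zero hμ0) this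

lemma gam_asc (b : ℂ) (hb : 0 ≤ b.re) (i : ℕ) :
    Complex.Gamma (b + 1) * (ascPochhammer ℂ i).eval (b + 1) = Complex.Gamma (b + i + 1) := by
  induction i with
  | zero => simp
  | succ i ih =>
    rw [ascPochhammer_succ_eval, ← mul_assoc, ih]
    have h : b + i + 1 ≠ 0 := by
      intro h
      have := congrArg Complex.re h
      simp at this
      have : (0:ℝ) ≤ i := by positivity
      linarith
    have := Complex.Gamma_add_one _ h
    rw [show b + (i + 1 : ℕ) + 1 = b + i + 1 + 1 by push_cast; ring, this]
    ring

lemma choose_gam (b : ℂ) (hb : 0 ≤ b.re) (i : ℕ) :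
    Ring.choose (b + i) i = Complex.Gamma (b + i + 1) / ((Nat.factorial i : ℂ) * Complex.Gamma (b + 1)) := by
  have hG : Complex.Gamma (b + 1) ≠ 0 := by
    apply Complex.Gamma_ne_zero_of_re_pos
    simp; linarith
  rw [Ring.choose_eq_smul, Polynomial.descPochhammer_smeval_eq_ascPochhammer, Polynomial.ascPochhammer_smeval_eq_eval, ← gam_asc b hb i]
  have h : (Nat.factorial i : ℂ) ≠ 0 := by exact_mod_cast Nat.factorial_ne_zero i
  rw [show b + i - i + 1 = b + 1 by ring]
  simp
  field_simp

lemma vand (ν : ℂ) (hν : ν.re = 0) (k : ℕ) :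
    ∑ ij ∈ Finset.HasAntidiagonal.antidiagonal k, bco ν ij.1 * bco ν ij.2 =
      (-1) ^ k * Complex.Gamma (2 * ν + 2 * k + 1) /
        ((Nat.factorial k : ℂ) * Complex.Gamma (2 * ν + k + 1) * Complex.Gamma (ν + k + 1) ^ 2) := by
  have hk : (0:ℝ) ≤ k := by positivity
  have h := Ring.add_choose_eq k (Commute.all (ν + k) (ν + k))
  have e1 : ν + k + (ν + k) = (2 * ν + k) + k := by ring
  rw [e1, choose_gam _ (by simp [hν])] at h
  have hG := gam_ne_s16 ν hν k
  have e2 : ∀ ij ∈ Finset.HasAntidiagonal.antidiagonal k, bco ν ij.1 * bco ν ij.2 =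
      ((-1) ^ k / Complex.Gamma (ν + k + 1) ^ 2) * (Ring.choose (ν + k) ij.1 * Ring.choose (ν + k) ij.2) := by
    intro ij hij
    have hs : ij.1 + ij.2 = k := Finset.HasAntidiagonal.mem_antidiagonal.1 hij
    have hsc : (k:ℂ) = ij.1 + ij.2 := by rw [← hs]; push_cast; ring
    have c1 : Ring.choose (ν + k) ij.1 = Complex.Gamma (ν + k + 1) / ((Nat.factorial ij.1 : ℂ) * Complex.Gamma (ν + ij.2 + 1)) := by
      rw [show ν + (k:ℂ) = (ν + ij.2) + ij.1 by rw [hsc]; ring, choose_gam _ (by simp [hν])]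
    have c2 : Ring.choose (ν + k) ij.2 = Complex.Gamma (ν + k + 1) / ((Nat.factorial ij.2 : ℂ) * Complex.Gamma (ν + ij.1 + 1)) := by
      rw [show ν + (k:ℂ) = (ν + ij.1) + ij.2 by rw [hsc]; ring, choose_gam _ (by simp [hν])]
    rw [c1, c2, ← hs, pow_add, bco, bco, hs]
    have := gam_ne_s16 ν hν ij.1
    have := gam_ne_s16 ν hν ij.2
    have : (Nat.factorial ij.1 : ℂ) ≠ 0 := by exact_mod_cast Nat.factorial_ne_zero _
    have : (Nat.factorial ij.2 : ℂ) ≠ 0 := by exact_mod_cast Nat.factorial_ne_zero _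
    field_simp
  rw [Finset.sum_congr rfl e2, ← Finset.mul_sum, ← h]
  rw [show 2 * ν + (k:ℂ) + k + 1 = 2 * ν + 2 * k + 1 by ring]
  field_simp

lemma wallis (ν : ℂ) (hν : ν.re = 0) (k : ℕ) :
    ∫ θ in Set.Ioo 0 (Real.pi / 2), Complex.exp ((2 * ν + 2 * k) * Real.log (Real.cos θ)) =
      Real.pi * Complex.Gamma (2 * ν + 2 * k + 1) * Complex.exp (-(2 * ν + 2 * k) * Real.log 2) /
        (2 * Complex.Gamma (ν + k + 1) ^ 2) := by
  have hk : (0:ℝ) ≤ k := by positivity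
  have hG := gam_ne_s16 ν hν k
  have hb := Complex.Gamma_mul_Gamma_eq_betaIntegral (s := 1 / 2) (t := ν + k + 1 / 2) (by norm_num) (by simp [hν]; positivity)
  have hdup := Complex.Gamma_mul_Gamma_add_half (ν + k + 1 / 2)
  have hsub : Complex.betaIntegral (1 / 2) (ν + k + 1 / 2) =
      2 * ∫ θ in Set.Ioo 0 (Real.pi / 2), Complex.exp ((2 * ν + 2 * k) * Real.log (Real.cos θ)) := by
    have himg : (fun θ : ℝ => Real.sin θ ^ 2) '' Set.Ioo 0 (Real.pi / 2) = Set.Ioo 0 1 := by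
      ext x
      constructor
      · rintro ⟨θ, hθ, rfl⟩
        have h1 := Real.sin_pos_of_pos_of_lt_pi hθ.1 (by linarith [hθ.2, Real.pi_pos])
        have h2 := Real.cos_pos_of_mem_Ioo ⟨by linarith [hθ.1, Real.pi_pos], hθ.2⟩
        have h3 := Real.sin_sq_add_cos_sq θ
        constructor <;> simp only <;> nlinarith
      · rintro ⟨h0, h1⟩
        refine ⟨Real.arcsin (Real.sqrt x), ⟨Real.arcsin_pos.2 (Real.sqrt_pos.2 h0), Real.arcsin_lt_pi_div_two.2 (by rw [Real.sqrt_lt' one_pos]; simpa using h1)⟩, ?_⟩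
        simp only
        rw [Real.sin_arcsin (by linarith [Real.sqrt_nonneg x]) (Real.sqrt_le_one.2 h1.le), Real.sq_sqrt h0.le]
    have hinj : Set.InjOn (fun θ : ℝ => Real.sin θ ^ 2) (Set.Ioo 0 (Real.pi / 2)) := by
      intro a ha b hb hab
      have h1 := Real.sin_pos_of_pos_of_lt_pi ha.1 (by linarith [ha.2, Real.pi_pos])
      have h2 := Real.sin_pos_of_pos_of_lt_pi hb.1 (by linarith [hb.2, Real.pi_pos])
      have h3 : Real.sin a = Real.sin b := by
        simp only at hab
        exact (pow_left_inj₀ h1.le h2.le two_ne_zero).1 hab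
      exact Real.injOn_sin ⟨by linarith [ha.1, Real.pi_pos], ha.2.le⟩ ⟨by linarith [hb.1, Real.pi_pos], hb.2.le⟩ h3
    have := integral_image_eq_integral_abs_deriv_smul (s := Set.Ioo 0 (Real.pi / 2))
      (f := fun θ : ℝ => Real.sin θ ^ 2) (f' := fun θ => 2 * Real.sin θ * Real.cos θ) measurableSet_Ioo
      (fun θ _ => by
        refine (((Real.hasDerivAt_sin θ).pow 2).congr_deriv ?_).hasDerivWithinAt
        simp) hinj (fun x : ℝ => (x:ℂ) ^ ((1:ℂ) / 2 - 1) * (1 - (x:ℂ)) ^ (ν + k + 1 / 2 - 1))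
    rw [himg] at this
    rw [Complex.betaIntegral, intervalIntegral.integral_of_le zero_le_one, integral_Ioc_eq_integral_Ioo, this, ← integral_const_mul]
    refine setIntegral_congr_fun measurableSet_Ioo (fun θ hθ => ?_)
    have h1 := Real.sin_pos_of_pos_of_lt_pi hθ.1 (by linarith [hθ.2, Real.pi_pos])
    have h2 := Real.cos_pos_of_mem_Ioo ⟨by linarith [hθ.1, Real.pi_pos], hθ.2⟩
    have e1 : (1:ℂ) - ((Real.sin θ ^ 2 : ℝ) : ℂ) = ((Real.cos θ ^ 2 : ℝ) : ℂ) := by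
      rw [Real.cos_sq']; push_cast; ring
    rw [e1, abs_of_pos (by positivity), Complex.real_smul,
      Complex.cpow_def_of_ne_zero (by exact_mod_cast (pow_pos h1 2).ne'),
      Complex.cpow_def_of_ne_zero (by exact_mod_cast (pow_pos h2 2).ne'),
      ← Complex.ofReal_log (by positivity), ← Complex.ofReal_log (by positivity), Real.log_pow, Real.log_pow]
    have e2 : Complex.exp (((2:ℕ) * Real.log (Real.sin θ) : ℝ) * (1 / 2 - 1)) = (Real.sin θ : ℂ)⁻¹ := by
      rw [show (((2:ℕ) * Real.log (Real.sin θ) : ℝ) : ℂ) * (1 / 2 - 1) = ((-Real.log (Real.sin θ) : ℝ) : ℂ) by push_cast; ring,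
        ← Complex.ofReal_exp, Real.exp_neg, Real.exp_log h1, Complex.ofReal_inv]
    have e3 : Complex.exp (((2:ℕ) * Real.log (Real.cos θ) : ℝ) * (ν + k + 1 / 2 - 1)) = Complex.exp ((2 * ν + 2 * k) * Real.log (Real.cos θ)) * (Real.cos θ : ℂ)⁻¹ := by
      rw [show (((2:ℕ) * Real.log (Real.cos θ) : ℝ) : ℂ) * (ν + k + 1 / 2 - 1) = (2 * ν + 2 * k) * Real.log (Real.cos θ) + ((-Real.log (Real.cos θ) : ℝ) : ℂ) by push_cast; ring,
        Complex.exp_add, ← Complex.ofReal_exp (-_), Real.exp_neg, Real.exp_log h2, Complex.ofReal_inv]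
    rw [e2, e3]
    have s1 : (Real.sin θ : ℂ) ≠ 0 := by exact_mod_cast h1.ne'
    have s2 : (Real.cos θ : ℂ) ≠ 0 := by exact_mod_cast h2.ne'
    rw [Complex.ofReal_mul, Complex.ofReal_mul]
    field_simp
    push_cast
    ring
  set W := ∫ θ in Set.Ioo 0 (Real.pi / 2), Complex.exp ((2 * ν + 2 * k) * Real.log (Real.cos θ))
  rw [hsub, Complex.Gamma_one_half_eq, show (1:ℂ) / 2 + (ν + k + 1 / 2) = ν + k + 1 by ring] at hb
  rw [show ν + (k:ℂ) + 1 / 2 + 1 / 2 = ν + k + 1 by ring, show 2 * (ν + (k:ℂ) + 1 / 2) = 2 * ν + 2 * k + 1 by ring,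
    show 1 - (2 * ν + 2 * (k:ℂ) + 1) = -(2 * ν + 2 * k) by ring, Complex.cpow_def_of_ne_zero two_ne_zero] at hdup
  have hl : Complex.log 2 = (Real.log 2 : ℂ) := by rw [Complex.ofReal_log (by norm_num)]; simp
  have hpi : (Real.pi : ℂ) ^ (1 / 2 : ℂ) = (Real.sqrt Real.pi : ℂ) := by
    rw [Real.sqrt_eq_rpow, Complex.ofReal_cpow Real.pi_pos.le]; norm_num
  have hpp : (Real.sqrt Real.pi : ℂ) * Real.sqrt Real.pi = Real.pi := by
    rw [← Complex.ofReal_mul, Real.mul_self_sqrt Real.pi_pos.le]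
  rw [hpi] at hb
  rw [hl, mul_comm (Real.log 2 : ℂ)] at hdup
  rw [eq_div_iff (mul_ne_zero two_ne_zero (pow_ne_zero 2 hG))]
  linear_combination (-Complex.Gamma (ν + k + 1)) * hb + (Real.sqrt Real.pi : ℂ) * hdup + Complex.Gamma (2 * ν + 2 * k + 1) * Complex.exp (-(2 * ν + 2 * k) * Real.log 2) * hpp

lemma neumann (ν : ℂ) (hν : ν.re = 0) {x : ℝ} (hx : 0 < x) :
    besselJ ν x ^ 2 = (2 / Real.pi) * ∫ θ in Set.Ioo 0 (Real.pi / 2), besselJ (2 * ν) (2 * x * Real.cos θ) := by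
  have h2ν : (2 * ν).re = 0 := by simp [hν]
  set t := Real.log (x / 2) with ht
  have hT : Real.log x = t + Real.log 2 := by
    rw [ht, Real.log_div hx.ne' two_ne_zero]; ring
  have hs : HasSum (fun k : ℕ => ∫ θ in Set.Ioo 0 (Real.pi / 2), bco (2 * ν) k * Complex.exp ((2 * ν + 2 * k) * ((Real.log x + Real.log (Real.cos θ) : ℝ) : ℂ)))
      (∫ θ in Set.Ioo 0 (Real.pi / 2), besselJ (2 * ν) (2 * x * Real.cos θ)) := by
    refine hasSum_integral_of_dominated_convergence (bound := fun k _ => ‖bco (2 * ν) k‖ * (Real.exp (2 * Real.log x)) ^ k) ?_ ?_ ?_ ?_ ?_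
    · intro k
      refine Measurable.aestronglyMeasurable ?_
      fun_prop
    · intro k
      filter_upwards [ae_restrict_mem measurableSet_Ioo] with θ hθ
      rw [ser_norm _ _ h2ν]
      have : Real.log (Real.cos θ) ≤ 0 := Real.log_nonpos (Real.cos_pos_of_mem_Ioo ⟨by linarith [hθ.1, Real.pi_pos], hθ.2⟩).le (Real.cos_le_one θ)
      gcongr
      linarith
    · exact Eventually.of_forall fun _ => bco_dec (2 * ν) h2ν _ (Real.exp_pos _).le
    · exact integrable_const _
    · filter_upwards [ae_restrict_mem measurableSet_Ioo] with θ hθ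
      have h2 := Real.cos_pos_of_mem_Ioo ⟨by linarith [hθ.1, Real.pi_pos], hθ.2⟩
      rw [bJ_eq, show 2 * x * Real.cos θ / 2 = x * Real.cos θ by ring, Real.log_mul hx.ne' h2.ne']
      exact (ser_summable (bco_dec (2 * ν) h2ν) (2 * ν) h2ν _).hasSum
  have hsn : Summable (fun k => ‖bco ν k * Complex.exp ((ν + 2 * k) * t)‖) := by
    simp_rw [ser_norm _ _ hν]
    exact bco_dec ν hν _ (Real.exp_pos _).le
  rw [← hs.tsum_eq, bJ_eq, ← ht, pow_two, y0, tsum_mul_tsum_eq_tsum_sum_antidiagonal_of_summable_norm hsn hsn, ← tsum_mul_left]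
  congr 1
  ext k
  have e1 : ∀ ij ∈ Finset.HasAntidiagonal.antidiagonal k, bco ν ij.1 * Complex.exp ((ν + 2 * ij.1) * t) * (bco ν ij.2 * Complex.exp ((ν + 2 * ij.2) * t)) =
      bco ν ij.1 * bco ν ij.2 * Complex.exp ((2 * ν + 2 * k) * t) := by
    intro ij hij
    have hs : ij.1 + ij.2 = k := Finset.HasAntidiagonal.mem_antidiagonal.1 hij
    have hsc : (k:ℂ) = ij.1 + ij.2 := by rw [← hs]; push_cast; ring
    rw [show (2 * ν + 2 * (k:ℂ)) * t = (ν + 2 * ij.1) * t + (ν + 2 * ij.2) * t by rw [hsc]; ring, Complex.exp_add]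
    ring
  have e2 : ∀ θ : ℝ, bco (2 * ν) k * Complex.exp ((2 * ν + 2 * k) * ((Real.log x + Real.log (Real.cos θ) : ℝ) : ℂ)) =
      bco (2 * ν) k * Complex.exp ((2 * ν + 2 * k) * t) * Complex.exp ((2 * ν + 2 * k) * Real.log 2) * Complex.exp ((2 * ν + 2 * k) * Real.log (Real.cos θ)) := by
    intro θ
    rw [hT, mul_assoc, mul_assoc, ← Complex.exp_add, ← Complex.exp_add]
    congr 2; push_cast; ring
  simp_rw [e2]
  rw [integral_const_mul, wallis ν hν, Finset.sum_congr rfl e1, ← Finset.sum_mul, vand ν hν, bco]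
  have e3 : Complex.exp ((2 * ν + 2 * k) * Real.log 2) * Complex.exp (-(2 * ν + 2 * k) * Real.log 2) = 1 := by
    rw [← Complex.exp_add, neg_mul, add_neg_cancel, Complex.exp_zero]
  have := gam_ne_s16 ν hν k
  have := gam_ne_s16 (2 * ν) h2ν k
  have : (Nat.factorial k : ℂ) ≠ 0 := by exact_mod_cast Nat.factorial_ne_zero _
  have : (Real.pi : ℂ) ≠ 0 := by exact_mod_cast Real.pi_ne_zero
  generalize Complex.exp ((2 * ν + 2 * k) * Real.log 2) = E1 at *
  generalize Complex.exp (-(2 * ν + 2 * k) * Real.log 2) = E2 at *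
  generalize Complex.exp ((2 * ν + 2 * k) * t) = E3 at *
  generalize Complex.Gamma (2 * ν + 2 * k + 1) = g1 at *
  generalize Complex.Gamma (2 * ν + k + 1) = g2 at *
  generalize Complex.Gamma (ν + k + 1) = g3 at *
  field_simp
  linear_combination (-g1 * E3) * e3

lemma imlap (τ : ℝ) (hτ : 0 < τ) {p b : ℝ} (hp : 0 < p) (hb : 0 < b) :
    (∫ x in Set.Ioi (0:ℝ), (Real.exp (-p * x) : ℂ) * besselJ (Complex.I * τ) (b * x)).im =
      -(2 / Real.pi) * Real.sinh (Real.pi * τ / 2) *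
        ∫ s in Set.Ioi (0:ℝ), Real.cos (τ * s) * (p / (p ^ 2 + (2 * Real.cosh s * (b / 2)) ^ 2)) := by
  set ξ := Real.arsinh (p / b) with hξd
  have hs : Real.sinh ξ = p / b := Real.sinh_arsinh _
  have hξ : 0 < ξ := Real.arsinh_pos_iff.2 (by positivity)
  have hc := Real.cosh_pos ξ
  have e1 : ∫ x in Set.Ioi (0:ℝ), (Real.exp (-p * x) : ℂ) * besselJ (Complex.I * τ) (b * x) =
      ((b⁻¹ / Real.cosh ξ : ℝ) : ℂ) * Complex.exp (-(Complex.I * τ) * ξ) := by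
    have h1 := integral_comp_mul_left_Ioi (fun x : ℝ => ((x ^ 0 * Real.exp (-(p / b) * x) : ℝ) : ℂ) * besselJ (Complex.I * τ) x) 0 hb
    have h2 := lap_formula τ hτ ξ hξ
    rw [lap, hs] at h2
    rw [mul_zero, Complex.real_smul] at h1
    have hcc : (Real.cosh ξ : ℂ) ≠ 0 := by exact_mod_cast hc.ne'
    rw [← h2, Complex.ofReal_div, div_mul_eq_mul_div, ← mul_assoc, mul_comm _ (Real.cosh ξ : ℂ), mul_assoc,
      mul_div_cancel_left₀ _ hcc, ← h1]
    refine setIntegral_congr_fun measurableSet_Ioi (fun x _ => ?_)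
    simp only [pow_zero, one_mul]
    rw [show -(p / b) * (b * x) = -p * x by field_simp]
  have e2 : (((b⁻¹ / Real.cosh ξ : ℝ) : ℂ) * Complex.exp (-(Complex.I * τ) * ξ)).im = -(b⁻¹ / Real.cosh ξ * Real.sin (τ * ξ)) := by
    rw [Complex.im_ofReal_mul, show -(Complex.I * τ) * (ξ:ℂ) = ((-(τ * ξ) : ℝ) : ℂ) * Complex.I by push_cast; ring, Complex.exp_ofReal_mul_I_im] <;> simp
  have hF := fourier_E (τ / 2) (2 * ξ) (by positivity)
  have h3 := integral_comp_mul_left_Ioi (fun t : ℝ => Real.cos (τ / 2 * t) / (Real.cosh t + Real.cosh (2 * ξ))) 0 two_pos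
  rw [mul_zero, smul_eq_mul] at h3
  have e4 : ∫ s in Set.Ioi (0:ℝ), Real.cos (τ * s) * (p / (p ^ 2 + (2 * Real.cosh s * (b / 2)) ^ 2)) =
      (2 * p / b ^ 2) * ∫ s in Set.Ioi (0:ℝ), Real.cos (τ / 2 * (2 * s)) / (Real.cosh (2 * s) + Real.cosh (2 * ξ)) := by
    rw [← integral_const_mul]
    refine setIntegral_congr_fun measurableSet_Ioi (fun s _ => ?_)
    rw [show τ / 2 * (2 * s) = τ * s by ring, Real.cosh_two_mul, Real.cosh_two_mul, Real.cosh_sq ξ, Real.sinh_sq s, hs]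
    have := Real.cosh_pos s
    have q1 : 0 < p ^ 2 + (2 * Real.cosh s * (b / 2)) ^ 2 := by positivity
    have q2 : Real.cosh s ^ 2 + (Real.cosh s ^ 2 - 1) + ((p / b) ^ 2 + 1 + (p / b) ^ 2) = 2 * (Real.cosh s ^ 2 + (p / b) ^ 2) := by ring
    rw [q2]
    field_simp
    ring
  rw [e1, e2, e4, h3]
  set I := ∫ t in Set.Ioi (0:ℝ), Real.cos (τ / 2 * t) / (Real.cosh t + Real.cosh (2 * ξ))
  rw [show Real.pi * (τ / 2) = Real.pi * τ / 2 by ring, show τ / 2 * (2 * ξ) = τ * ξ by ring, Real.sinh_two_mul, hs] at hF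
  have hsh : 0 < Real.sinh (Real.pi * τ / 2) := Real.sinh_pos_iff.2 (by positivity)
  have hpi := Real.pi_pos
  rw [eq_div_iff hsh.ne'] at hF
  have hF2 : Real.sin (τ * ξ) = 2 * (p / b) * Real.cosh ξ * I * Real.sinh (Real.pi * τ / 2) / Real.pi := by
    rw [eq_div_iff hpi.ne']; linarith
  rw [hF2]
  field_simp

lemma inv_sqrt_le (p s : ℝ) : 1 / Real.sqrt (p ^ 2 + (2 * Real.cosh s) ^ 2) ≤ 1 / (Real.cosh s + Real.cosh 0) := by
  have h := Real.one_le_cosh s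
  rw [Real.cosh_zero]
  refine one_div_le_one_div_of_le (by linarith) (Real.le_sqrt_of_sq_le ?_)
  nlinarith [sq_nonneg p]

lemma im_lap_sq (τ : ℝ) (hτ : 0 < τ) {p : ℝ} (hp : 0 < p) :
    ∫ x in Set.Ioi (0:ℝ), Real.exp (-p * x) * (besselJ (Complex.I * τ / 2) x ^ 2).im =
      -(2 / Real.pi) * Real.sinh (Real.pi * τ / 2) *
        ∫ s in Set.Ioi (0:ℝ), Real.cos (τ * s) / Real.sqrt (p ^ 2 + (2 * Real.cosh s) ^ 2) := by
  set μ := Complex.I * (τ : ℂ) with hμd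
  have hμ : μ.re = 0 := by simp [hμd]
  have hν : (μ / 2).re = 0 := by simp [hμ]
  have h2 : 2 * (μ / 2) = μ := by ring
  obtain ⟨K, hK, hJK⟩ := bJ_bound μ hμ
  have hpi := Real.pi_pos
  have hcos : ∀ θ ∈ Set.Ioo 0 (Real.pi / 2), 0 < Real.cos θ := fun θ hθ =>
    Real.cos_pos_of_mem_Ioo ⟨by linarith [hθ.1, Real.pi_pos], hθ.2⟩
  -- product integrability
  have iprod : Integrable (fun z : ℝ × ℝ => (Real.exp (-p * z.1) : ℂ) * besselJ μ (2 * z.1 * Real.cos z.2))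
      ((volume.restrict (Set.Ioi (0:ℝ))).prod (volume.restrict (Set.Ioo 0 (Real.pi / 2)))) := by
    have b1 := (pe_int 0 hp).mul_prod (integrable_const (μ := volume.restrict (Set.Ioo 0 (Real.pi / 2))) K)
    refine b1.mono' ?_ ?_
    · rw [Measure.prod_restrict]
      refine ContinuousOn.aestronglyMeasurable ?_ (measurableSet_Ioi.prod measurableSet_Ioo)
      refine ContinuousOn.mul (by fun_prop) ((bJ_cont μ hμ).comp (by fun_prop) ?_)
      rintro ⟨x, θ⟩ ⟨hx, hθ⟩
      have := hcos θ hθ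
      have : 0 < x := hx
      simp only [Set.mem_Ioi]
      positivity
    · refine Eventually.of_forall fun z => ?_
      rw [norm_mul, Complex.norm_real, Real.norm_eq_abs, abs_of_pos (Real.exp_pos _), pow_zero, one_mul]
      have := hJK (2 * z.1 * Real.cos z.2)
      gcongr
  have i1 : Integrable (fun x : ℝ => (Real.exp (-p * x) : ℂ) * besselJ (μ / 2) x ^ 2) (volume.restrict (Set.Ioi (0:ℝ))) := by
    obtain ⟨K', hK', hJK'⟩ := bJ_bound (μ / 2) hν
    have h3 := (pe_int 0 hp).ofReal (𝕜 := ℂ)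
    simp only [pow_zero, one_mul] at h3
    refine Integrable.mul_bdd (c := K' ^ 2) h3
      (((bJ_cont _ hν).pow 2).aestronglyMeasurable measurableSet_Ioi) (Eventually.of_forall fun x => ?_)
    rw [norm_pow]
    have := hJK' x
    gcongr
  have e1 : ∫ x in Set.Ioi (0:ℝ), Real.exp (-p * x) * (besselJ (μ / 2) x ^ 2).im =
      (∫ x in Set.Ioi (0:ℝ), (Real.exp (-p * x) : ℂ) * besselJ (μ / 2) x ^ 2).im := by
    have := integral_im i1
    simp only [RCLike.im_eq_complex_im] at this
    rw [← this]
    congr 1; ext x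
    rw [Complex.im_ofReal_mul]
  have e2 : ∫ x in Set.Ioi (0:ℝ), (Real.exp (-p * x) : ℂ) * besselJ (μ / 2) x ^ 2 =
      ((2 / Real.pi : ℝ) : ℂ) * ∫ θ in Set.Ioo 0 (Real.pi / 2), ∫ x in Set.Ioi (0:ℝ), (Real.exp (-p * x) : ℂ) * besselJ μ (2 * Real.cos θ * x) := by
    have : ∀ x ∈ Set.Ioi (0:ℝ), (Real.exp (-p * x) : ℂ) * besselJ (μ / 2) x ^ 2 =
      ((2 / Real.pi : ℝ) : ℂ) * ∫ θ in Set.Ioo 0 (Real.pi / 2), (Real.exp (-p * x) : ℂ) * besselJ μ (2 * x * Real.cos θ) := by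
      intro x hx
      rw [neumann _ hν hx, h2, integral_const_mul]
      push_cast
      ring
    rw [setIntegral_congr_fun measurableSet_Ioi this, integral_const_mul, integral_integral_swap iprod]
    congr 1
    congr 1; ext θ
    congr 1; ext x
    rw [show 2 * x * Real.cos θ = 2 * Real.cos θ * x by ring]
  have e3 : (∫ θ in Set.Ioo 0 (Real.pi / 2), ∫ x in Set.Ioi (0:ℝ), (Real.exp (-p * x) : ℂ) * besselJ μ (2 * Real.cos θ * x)).im =
      ∫ θ in Set.Ioo 0 (Real.pi / 2), -(2 / Real.pi) * Real.sinh (Real.pi * τ / 2) *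
        ∫ s in Set.Ioi (0:ℝ), Real.cos (τ * s) * (p / (p ^ 2 + (2 * Real.cosh s) ^ 2 * Real.cos θ ^ 2)) := by
    have i2 := iprod.integral_prod_right
    have := integral_im i2
    simp only [RCLike.im_eq_complex_im] at this
    have e : ∀ θ x : ℝ, 2 * x * Real.cos θ = 2 * Real.cos θ * x := fun _ _ => by ring
    simp only [e] at this
    rw [← this]
    refine setIntegral_congr_fun measurableSet_Ioo (fun θ hθ => ?_)
    have hc := hcos θ hθ
    rw [imlap τ hτ hp (by positivity)]
    congr 1
    congr 1; ext s
    rw [show 2 * Real.cosh s * (2 * Real.cos θ / 2) = 2 * Real.cosh s * Real.cos θ by ring, mul_pow]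
  have hint : ∀ s : ℝ, ∫ θ in Set.Ioo 0 (Real.pi / 2), p / (p ^ 2 + (2 * Real.cosh s) ^ 2 * Real.cos θ ^ 2) = (Real.pi / 2) / Real.sqrt (p ^ 2 + (2 * Real.cosh s) ^ 2) := by
    intro s
    rw [← arct_int p _ hp, intervalIntegral.integral_of_le (by positivity), integral_Ioc_eq_integral_Ioo]
  have iprod2 : Integrable (fun z : ℝ × ℝ => Real.cos (τ * z.1) * (p / (p ^ 2 + (2 * Real.cosh z.1) ^ 2 * Real.cos z.2 ^ 2)))
      ((volume.restrict (Set.Ioi (0:ℝ))).prod (volume.restrict (Set.Ioo 0 (Real.pi / 2)))) := by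
    have hcont : Continuous (fun z : ℝ × ℝ => p / (p ^ 2 + (2 * Real.cosh z.1) ^ 2 * Real.cos z.2 ^ 2)) :=
      continuous_const.div (by fun_prop) (fun z => by positivity)
    refine Integrable.bdd_mul (c := 1) ?_ (Continuous.aestronglyMeasurable (by fun_prop)) (Eventually.of_forall fun z => Real.abs_cos_le_one _)
    rw [integrable_prod_iff hcont.aestronglyMeasurable]
    constructor
    · refine Eventually.of_forall fun s => ?_
      exact (((arct_cont p (2 * Real.cosh s) hp).integrableOn_Icc (a := 0) (b := Real.pi / 2)).mono_set Set.Ioo_subset_Icc_self)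
    · have : ∀ z θ : ℝ, ‖p / (p ^ 2 + (2 * Real.cosh z) ^ 2 * Real.cos θ ^ 2)‖ = p / (p ^ 2 + (2 * Real.cosh z) ^ 2 * Real.cos θ ^ 2) := by
        intro z θ
        rw [Real.norm_eq_abs, abs_of_nonneg (by positivity)]
      simp only [this, hint]
      refine Integrable.mono' ((cosh_int (g := fun _ => 1) continuous_const (by simp) 0).integrableOn.const_mul (Real.pi / 2)) (Continuous.aestronglyMeasurable ?_) (Eventually.of_forall fun s => ?_)
      · exact continuous_const.div (by fun_prop) (fun s => by have := Real.cosh_pos s; positivity)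
      · rw [Real.norm_eq_abs, abs_of_nonneg (by positivity), div_eq_mul_one_div]
        have := inv_sqrt_le p s
        gcongr
  rw [show Complex.I * (τ:ℂ) / 2 = μ / 2 by rw [hμd], e1, e2, Complex.im_ofReal_mul, e3, integral_const_mul, ← integral_integral_swap iprod2]
  simp only [integral_const_mul, hint]
  have e5 : ∀ s : ℝ, Real.cos (τ * s) * (Real.pi / 2 / Real.sqrt (p ^ 2 + (2 * Real.cosh s) ^ 2)) = (Real.pi / 2) * (Real.cos (τ * s) / Real.sqrt (p ^ 2 + (2 * Real.cosh s) ^ 2)) := fun s => by ring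
  simp only [e5, integral_const_mul]
  field_simp

lemma ew_cont (q : ℝ) : Continuous (fun z : ℝ × ℝ => Real.exp (-(q * Real.sinh z.2) * z.1) * (Real.sinh z.2 / Real.cosh z.2 ^ 2)) :=
  Continuous.mul (by fun_prop) (sdc_cont.comp continuous_snd)

lemma ew_prod (q : ℝ) (hq : 0 < q) :
    Integrable (fun z : ℝ × ℝ => Real.exp (-(q * Real.sinh z.2) * z.1) * (Real.sinh z.2 / Real.cosh z.2 ^ 2))
      ((volume.restrict (Set.Ioi (0:ℝ))).prod (volume.restrict (Set.Ioi (0:ℝ)))) := by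
  rw [integrable_prod_iff' (ew_cont q).aestronglyMeasurable]
  have hsp : ∀ t ∈ Set.Ioi (0:ℝ), 0 < q * Real.sinh t := fun t ht => mul_pos hq (Real.sinh_pos_iff.2 ht)
  constructor
  · refine (ae_restrict_iff' measurableSet_Ioi).2 (Eventually.of_forall fun t ht => ?_)
    have := (pe_int 0 (hsp t ht)).mul_const (Real.sinh t / Real.cosh t ^ 2)
    simpa using this
  · have hI := (cosh_int (g := fun _ => 1) continuous_const (by simp) 0).integrableOn (s := Set.Ioi 0) |>.const_mul (2 / q)
    refine hI.mono' (ew_cont q).norm.stronglyMeasurable.integral_prod_left'.aestronglyMeasurable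
      ((ae_restrict_iff' measurableSet_Ioi).2 (Eventually.of_forall fun t ht => ?_))
    have hs : 0 < Real.sinh t := Real.sinh_pos_iff.2 ht
    have hc := Real.one_le_cosh t
    have e : ∫ x in Set.Ioi (0:ℝ), ‖Real.exp (-(q * Real.sinh t) * x) * (Real.sinh t / Real.cosh t ^ 2)‖ = 1 / (q * Real.cosh t ^ 2) := by
      have : ∀ x : ℝ, ‖Real.exp (-(q * Real.sinh t) * x) * (Real.sinh t / Real.cosh t ^ 2)‖ = Real.exp (-(q * Real.sinh t) * x) * (Real.sinh t / Real.cosh t ^ 2) := by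
        intro x
        rw [Real.norm_eq_abs, abs_of_nonneg (by positivity)]
      simp only [this]
      rw [integral_mul_const, integral_exp_mul_Ioi (by linarith [hsp t ht])]
      simp
      field_simp
    simp only [e]
    rw [Real.norm_eq_abs, abs_of_nonneg (by positivity), Real.cosh_zero, div_mul_div_comm]
    rw [div_le_div_iff₀ (by positivity) (by positivity)]
    have : Real.cosh t + 1 ≤ 2 * Real.cosh t ^ 2 := by nlinarith
    nlinarith [mul_le_mul_of_nonneg_left this hq.le]

lemma wcos_swap (n q : ℝ) (hq : 0 < q) :
    ∫ t in Set.Ioi (0:ℝ), (Real.sinh t / Real.cosh t ^ 2) *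
      (∫ s in Set.Ioi (0:ℝ), Real.cos (n * s) / Real.sqrt ((q * Real.sinh t) ^ 2 + (2 * Real.cosh s) ^ 2)) =
    ∫ s in Set.Ioi (0:ℝ), Real.cos (n * s) * (1 / (q + 2 * Real.cosh s)) := by
  have ip : Integrable (fun z : ℝ × ℝ => Real.cos (n * z.1) * ((Real.sinh z.2 / Real.cosh z.2 ^ 2) / Real.sqrt ((q * Real.sinh z.2) ^ 2 + (2 * Real.cosh z.1) ^ 2)))
      ((volume.restrict (Set.Ioi (0:ℝ))).prod (volume.restrict (Set.Ioi (0:ℝ)))) := by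
    have hcont : Continuous (fun z : ℝ × ℝ => (Real.sinh z.2 / Real.cosh z.2 ^ 2) / Real.sqrt ((q * Real.sinh z.2) ^ 2 + (2 * Real.cosh z.1) ^ 2)) := by
      refine (sdc_cont.comp continuous_snd).div (by fun_prop) (fun z => ?_)
      have := Real.cosh_pos z.1
      positivity
    refine Integrable.bdd_mul (c := 1) ?_ (Continuous.aestronglyMeasurable (by fun_prop)) (Eventually.of_forall fun z => Real.abs_cos_le_one _)
    rw [integrable_prod_iff hcont.aestronglyMeasurable]
    constructor
    · refine Eventually.of_forall fun s => ?_
      exact w_intble q (2 * Real.cosh s) hq (by have := Real.cosh_pos s; positivity)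
    · have : ∀ s : ℝ, ∫ t in Set.Ioi (0:ℝ), ‖(Real.sinh t / Real.cosh t ^ 2) / Real.sqrt ((q * Real.sinh t) ^ 2 + (2 * Real.cosh s) ^ 2)‖ = 1 / (q + 2 * Real.cosh s) := by
        intro s
        rw [← w_integral q (2 * Real.cosh s) hq (by have := Real.cosh_pos s; positivity)]
        refine setIntegral_congr_fun measurableSet_Ioi (fun t ht => ?_)
        have := sdc_nonneg t (le_of_lt ht)
        rw [Real.norm_eq_abs, abs_of_nonneg (by positivity)]
      simp only [this]
      have hp : ∀ s : ℝ, 0 < q + 2 * Real.cosh s := fun s => by have := Real.cosh_pos s; positivity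
      refine Integrable.mono' ((cosh_int (g := fun _ => 1) continuous_const (by simp) 0).integrableOn) (Continuous.aestronglyMeasurable ?_) (Eventually.of_forall fun s => ?_)
      · exact continuous_const.div (by fun_prop) (fun s => (hp s).ne')
      · have := hp s
        have := Real.one_le_cosh s
        rw [Real.norm_eq_abs, abs_of_nonneg (by positivity), Real.cosh_zero]
        refine one_div_le_one_div_of_le (by linarith) (by linarith)
  have h := integral_integral_swap (f := fun s t : ℝ => Real.cos (n * s) * ((Real.sinh t / Real.cosh t ^ 2) / Real.sqrt ((q * Real.sinh t) ^ 2 + (2 * Real.cosh s) ^ 2))) ip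
  have e1 : ∀ s : ℝ, ∫ t in Set.Ioi (0:ℝ), Real.cos (n * s) * ((Real.sinh t / Real.cosh t ^ 2) / Real.sqrt ((q * Real.sinh t) ^ 2 + (2 * Real.cosh s) ^ 2)) = Real.cos (n * s) * (1 / (q + 2 * Real.cosh s)) := by
    intro s
    rw [integral_const_mul, w_integral q (2 * Real.cosh s) hq (by have := Real.cosh_pos s; positivity)]
  simp only [e1] at h
  rw [h]
  congr 1; ext t
  rw [← integral_const_mul]
  congr 1; ext s
  ring

noncomputable def kk (x u : ℝ) : ℝ := x * struveK0 (2 * x * Real.cosh u) - 1 / (Real.pi * Real.cosh u)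

noncomputable def hh (q x : ℝ) : ℝ := ∫ t in Set.Ioi (0:ℝ), Real.exp (-(q * Real.sinh t) * x) * (Real.sinh t / Real.cosh t ^ 2)

lemma kk_eq (u : ℝ) {x : ℝ} (hx : 0 < x) : kk x u = -(1 / (Real.pi * Real.cosh u)) * hh (2 * Real.cosh u) x := by
  have hc := Real.cosh_pos u
  have h := struve_ker (2 * x * Real.cosh u) (by positivity)
  have e : hh (2 * Real.cosh u) x = ∫ t in Set.Ioi (0:ℝ), Real.exp (-(2 * x * Real.cosh u) * Real.sinh t) * (Real.sinh t / Real.cosh t ^ 2) := by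
    unfold hh
    congr 1; ext t
    congr 2; ring
  have hpi := Real.pi_pos
  rw [e, ← neg_eq_iff_eq_neg.2 h, kk, struveK0]
  field_simp

lemma hh_int (q : ℝ) (hq : 0 < q) : IntegrableOn (hh q) (Set.Ioi 0) := (ew_prod q hq).integral_prod_left

lemma kk_int (n : ℕ) (hn : 1 ≤ n) (u : ℝ) :
    (∫ x in Set.Ioi (0:ℝ), ((besselJ (Complex.I * n / 2) x) ^ 2).im * kk x u) * Real.sinh (2 * u) =
      Real.sinh (Real.pi * n / 2) * (2 / (Real.pi * Real.sinh (Real.pi * n)) * Real.sin (n * u)) := by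
  have hν : (Complex.I * (n:ℂ) / 2).re = 0 := by simp
  obtain ⟨K, hK, hJK⟩ := bJ_bound _ hν
  have hJc := bJ_cont _ hν
  have hc := Real.cosh_pos u
  have hpi := Real.pi_pos
  have hn0 : (0:ℝ) < n := by exact_mod_cast hn
  set q := 2 * Real.cosh u with hq
  have hq0 : 0 < q := by positivity
  set m : ℝ → ℝ := fun x => ((besselJ (Complex.I * n / 2) x) ^ 2).im with hm
  have hmc : ContinuousOn m (Set.Ioi 0) := Complex.continuous_im.comp_continuousOn (hJc.pow 2)
  have hmb : ∀ x, ‖m x‖ ≤ K ^ 2 := fun x => by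
    refine (Complex.abs_im_le_norm _).trans ?_
    rw [norm_pow]
    have := hJK x
    gcongr
  have ip : Integrable (fun z : ℝ × ℝ => m z.1 * (Real.exp (-(q * Real.sinh z.2) * z.1) * (Real.sinh z.2 / Real.cosh z.2 ^ 2)))
      ((volume.restrict (Set.Ioi (0:ℝ))).prod (volume.restrict (Set.Ioi (0:ℝ)))) :=
    (ew_prod q hq0).bdd_mul (c := K ^ 2) (hmc.aestronglyMeasurable measurableSet_Ioi).comp_fst (Eventually.of_forall fun z => hmb _)
  have h1 : ∫ x in Set.Ioi (0:ℝ), m x * kk x u = -(1 / (Real.pi * Real.cosh u)) * ∫ x in Set.Ioi (0:ℝ), ∫ t in Set.Ioi (0:ℝ), m x * (Real.exp (-(q * Real.sinh t) * x) * (Real.sinh t / Real.cosh t ^ 2)) := by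
    rw [← integral_const_mul]
    refine setIntegral_congr_fun measurableSet_Ioi (fun x hx => ?_)
    rw [kk_eq u hx, integral_const_mul, hh]
    ring
  have h2 : ∫ t in Set.Ioi (0:ℝ), ∫ x in Set.Ioi (0:ℝ), m x * (Real.exp (-(q * Real.sinh t) * x) * (Real.sinh t / Real.cosh t ^ 2)) =
      -(2 / Real.pi) * Real.sinh (Real.pi * n / 2) * ∫ t in Set.Ioi (0:ℝ), (Real.sinh t / Real.cosh t ^ 2) *
      (∫ s in Set.Ioi (0:ℝ), Real.cos (n * s) / Real.sqrt ((q * Real.sinh t) ^ 2 + (2 * Real.cosh s) ^ 2)) := by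
    rw [← integral_const_mul]
    refine setIntegral_congr_fun measurableSet_Ioi (fun t ht => ?_)
    have h3 := im_lap_sq n hn0 (mul_pos hq0 (Real.sinh_pos_iff.2 ht))
    have e : ∀ x, m x * (Real.exp (-(q * Real.sinh t) * x) * (Real.sinh t / Real.cosh t ^ 2)) = (Real.exp (-(q * Real.sinh t) * x) * (besselJ (Complex.I * (n:ℝ) / 2) x ^ 2).im) * (Real.sinh t / Real.cosh t ^ 2) := by
      intro x; simp only [hm, Complex.ofReal_natCast]; ring
    simp only [e]
    rw [integral_mul_const, h3]
    ring
  rw [h1, integral_integral_swap ip, h2, wcos_swap n q hq0]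
  have e5 : ∫ s in Set.Ioi (0:ℝ), Real.cos (n * s) * (1 / (q + 2 * Real.cosh s)) = (1 / 2) * ∫ s in Set.Ioi (0:ℝ), Real.cos (n * s) / (Real.cosh s + Real.cosh u) := by
    rw [← integral_const_mul]
    congr 1; ext s
    have := Real.cosh_pos s
    rw [hq]
    field_simp
    ring
  have hF := fourier_E n u hn0.ne'
  rw [e5, Real.sinh_two_mul]
  set I := ∫ s in Set.Ioi (0:ℝ), Real.cos (n * s) / (Real.cosh s + Real.cosh u)
  have hsh : 0 < Real.sinh (Real.pi * n) := Real.sinh_pos_iff.2 (by positivity)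
  have hF2 : Real.sin (n * u) = Real.sinh u * I * Real.sinh (Real.pi * n) / Real.pi := by
    rw [hF]; field_simp
  rw [hF2]
  field_simp

lemma kk_meas : StronglyMeasurable (fun z : ℝ × ℝ => hh (2 * Real.cosh z.2) z.1) := by
  have : Continuous (fun w : (ℝ × ℝ) × ℝ => Real.exp (-((2 * Real.cosh w.1.2) * Real.sinh w.2) * w.1.1) * (Real.sinh w.2 / Real.cosh w.2 ^ 2)) :=
    Continuous.mul (by fun_prop) (sdc_cont.comp continuous_snd)
  exact this.stronglyMeasurable.integral_prod_right'

lemma hh_nonneg (q x : ℝ) : 0 ≤ hh q x :=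
  setIntegral_nonneg measurableSet_Ioi (fun t ht => mul_nonneg (Real.exp_pos _).le (sdc_nonneg t (le_of_lt ht)))

lemma hh_ex (q x : ℝ) (hq : 0 < q) (hx : 0 < x) :
    IntegrableOn (fun t => Real.exp (-(q * Real.sinh t) * x) * (Real.sinh t / Real.cosh t ^ 2)) (Set.Ioi 0) := by
  have h := exp_sdc_int (q * x) (by positivity)
  refine h.congr_fun (fun t _ => ?_) measurableSet_Ioi
  simp only
  rw [show -(q * x) * Real.sinh t = -(q * Real.sinh t) * x by ring]

lemma hh_le (u x : ℝ) (hx : 0 < x) : hh (2 * Real.cosh u) x ≤ hh 2 x := by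
  have hc := Real.one_le_cosh u
  refine setIntegral_mono_on (hh_ex _ x (by positivity) hx) (hh_ex 2 x two_pos hx) measurableSet_Ioi (fun t ht => ?_)
  refine mul_le_mul_of_nonneg_right (Real.exp_le_exp.2 ?_) (sdc_nonneg t (le_of_lt ht))
  have hs : 0 < Real.sinh t := Real.sinh_pos_iff.2 ht
  have : 0 < Real.sinh t * x := by positivity
  nlinarith

lemma final (ψ : ℝ → ℂ) (hψ : Continuous ψ) (φ : ℝ → ℂ) (hφ : ∀ u : ℝ, φ u = ψ u * (Real.sinh (2 * u) : ℂ))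
    (f : ℝ → ℂ) (hf : ∀ x : ℝ, 0 < x → f x = ∫ u in (-Real.pi)..Real.pi, (kk x u : ℂ) * φ u)
    (n : ℕ) (hn : 1 ≤ n) :
    (1 / (Real.sinh (Real.pi * n / 2) : ℂ)) *
        ∫ x in Set.Ioi (0 : ℝ), ((((besselJ (Complex.I * n / 2) x) ^ 2).im : ℂ)) * f x
      = ((2 / (Real.pi * Real.sinh (Real.pi * n)) : ℝ) : ℂ) *
          ∫ u in (-Real.pi)..Real.pi, ψ u * (Real.sin (n * u) : ℂ) := by
  have hν : (Complex.I * (n:ℂ) / 2).re = 0 := by simp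
  obtain ⟨K, hK, hJK⟩ := bJ_bound _ hν
  have hJc := bJ_cont _ hν
  have hpi := Real.pi_pos
  have hn0 : (0:ℝ) < n := by exact_mod_cast hn
  have hkey := kk_int n hn
  set m : ℝ → ℝ := fun x => ((besselJ (Complex.I * n / 2) x) ^ 2).im with hm
  have hmc : ContinuousOn m (Set.Ioi 0) := Complex.continuous_im.comp_continuousOn (hJc.pow 2)
  have hmb : ∀ x, ‖m x‖ ≤ K ^ 2 := fun x => by
    refine (Complex.abs_im_le_norm _).trans ?_
    rw [norm_pow]
    have := hJK x
    gcongr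
  have hφc : Continuous φ := by
    rw [show φ = fun u => ψ u * (Real.sinh (2 * u) : ℂ) from funext hφ]
    fun_prop
  have hφi : Integrable φ (volume.restrict (Set.Ioc (-Real.pi) Real.pi)) :=
    (hφc.integrableOn_Icc (a := -Real.pi) (b := Real.pi)).mono_set Set.Ioc_subset_Icc_self
  have hle : -Real.pi ≤ Real.pi := by linarith
  have hkm : StronglyMeasurable (fun z : ℝ × ℝ => -(1 / (Real.pi * Real.cosh z.2)) * hh (2 * Real.cosh z.2) z.1) := by
    refine StronglyMeasurable.mul (Continuous.stronglyMeasurable ?_) kk_meas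
    refine (continuous_const.div (by fun_prop) (fun z => ?_)).neg
    have := Real.cosh_pos z.2
    positivity
  set P := (volume.restrict (Set.Ioi (0:ℝ))).prod (volume.restrict (Set.Ioc (-Real.pi) Real.pi)) with hP
  have hpos : ∀ᵐ z ∂P, 0 < z.1 := by
    rw [hP, Measure.prod_restrict]
    exact (ae_restrict_iff' (measurableSet_Ioi.prod measurableSet_Ioc)).2 (Eventually.of_forall fun z hz => hz.1)
  have ip : Integrable (fun z : ℝ × ℝ => (m z.1 : ℂ) * ((kk z.1 z.2 : ℂ) * φ z.2)) P := by
    refine Integrable.bdd_mul (c := K ^ 2) ?_ ?_ (Eventually.of_forall fun z => ?_)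
    · have b1 := (hh_int 2 two_pos).mul_prod hφi.norm
      refine b1.mono' ?_ ?_
      · refine AEStronglyMeasurable.mul ?_ (hφi.aestronglyMeasurable.comp_snd)
        refine Complex.continuous_ofReal.comp_aestronglyMeasurable ⟨_, hkm, ?_⟩
        filter_upwards [hpos] with z hz
        exact kk_eq z.2 hz
      · filter_upwards [hpos] with z hz
        rw [norm_mul, Complex.norm_real]
        refine mul_le_mul_of_nonneg_right ?_ (norm_nonneg _)
        have h1 := hh_nonneg (2 * Real.cosh z.2) z.1
        have h2 := hh_le z.2 z.1 hz
        have hc := Real.one_le_cosh z.2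
        rw [kk_eq z.2 hz, norm_mul, norm_neg, Real.norm_eq_abs, Real.norm_eq_abs, abs_of_nonneg h1, abs_of_nonneg (by positivity)]
        have h3 : 1 / (Real.pi * Real.cosh z.2) ≤ 1 := by
          rw [div_le_one (by positivity)]
          nlinarith [Real.pi_gt_three]
        nlinarith
    · exact (Complex.continuous_ofReal.comp_aestronglyMeasurable (hmc.aestronglyMeasurable measurableSet_Ioi)).comp_fst
    · rw [Complex.norm_real]; exact hmb _
  have e1 : ∫ x in Set.Ioi (0 : ℝ), (m x : ℂ) * f x = ∫ x in Set.Ioi (0 : ℝ), ∫ u in Set.Ioc (-Real.pi) Real.pi, (m x : ℂ) * ((kk x u : ℂ) * φ u) := by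
    refine setIntegral_congr_fun measurableSet_Ioi (fun x hx => ?_)
    simp only [integral_const_mul]
    rw [hf x hx, intervalIntegral.integral_of_le hle]
  have hs2 : (Real.sinh (Real.pi * n / 2) : ℂ) ≠ 0 := by
    exact_mod_cast (Real.sinh_pos_iff.2 (by positivity : 0 < Real.pi * n / 2)).ne'
  have e2 : ∀ u : ℝ, ∫ x in Set.Ioi (0 : ℝ), (m x : ℂ) * ((kk x u : ℂ) * φ u) =
      ((Real.sinh (Real.pi * n / 2) * (2 / (Real.pi * Real.sinh (Real.pi * n))) : ℝ) : ℂ) * (ψ u * (Real.sin (n * u) : ℂ)) := by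
    intro u
    have : ∀ x, (m x : ℂ) * ((kk x u : ℂ) * φ u) = ((m x * kk x u : ℝ) : ℂ) * φ u := fun x => by push_cast; ring
    simp only [this]
    rw [integral_mul_const, integral_complex_ofReal, hφ]
    have h := congrArg (fun r : ℝ => (r : ℂ)) (hkey u)
    simp only [Complex.ofReal_mul] at h ⊢
    linear_combination ψ u * h
  rw [e1, integral_integral_swap ip]
  simp only [e2]
  rw [integral_const_mul, intervalIntegral.integral_of_le hle, Complex.ofReal_mul, ← mul_assoc, ← mul_assoc, one_div, inv_mul_cancel₀ hs2, one_mul]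

theorem statement16 (ψ : ℝ → ℂ) (C : ℝ) (hC : 0 < C)
    (hper : ∀ u : ℝ, ψ (u + 2 * Real.pi) = ψ u)
    (hlip : ∀ u v : ℝ, ‖ψ u - ψ v‖ ≤ C * |u - v|)
    (φ : ℝ → ℂ) (hφ : ∀ u : ℝ, φ u = ψ u * (Real.sinh (2 * u) : ℂ))
    (f : ℝ → ℂ)
    (hf : ∀ x : ℝ, 0 < x → f x = ∫ u in (-Real.pi)..Real.pi,
      ((x * struveK0 (2 * x * Real.cosh u) - 1 / (Real.pi * Real.cosh u) : ℝ) : ℂ) * φ u)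
    (n : ℕ) (hn : 1 ≤ n) :
    (1 / (Real.sinh (Real.pi * n / 2) : ℂ)) *
        ∫ x in Set.Ioi (0 : ℝ), ((((besselJ (Complex.I * n / 2) x) ^ 2).im : ℂ)) * f x
      = ((2 / (Real.pi * Real.sinh (Real.pi * n)) : ℝ) : ℂ) *
          ∫ u in (-Real.pi)..Real.pi, ψ u * (Real.sin (n * u) : ℂ) := by
  have hψ : Continuous ψ := by
    refine (LipschitzWith.of_dist_le_mul (K := C.toNNReal) (fun u v => ?_)).continuous
    rw [dist_eq_norm, Real.dist_eq, Real.coe_toNNReal _ hC.le]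
    exact hlip u v
  exact final ψ hψ φ hφ f hf n hn
end
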